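/- arXiv:1912.12245 — 7 statements merged into one kernel-verified Lean document; each statement's English description precedes it below -/
import Mathlib

section
/- Unique continuation for the mode-k adjoint Boussinesq eigen-system (ODE form of Proposition 3.4): Let ν > 0 and L > 0. There exists an at most countable set N ⊂ (0, ν) such that for every α ∈ (0, ν) \ N the following holds: for every k ∈ ℤ \ {0}, every λ ∈ ℝ, and all functions ψ₁, ψ₂, ξ, q : [0,L] → ℂ which are sufficiently smooth (ψ₁, ψ₂ of class C⁴, q of class C³, ξ of class C⁶ on [0,L]) and satisfy the system (S_k) together with the extra observation condition ξ'(L) = 0, one has ψ₁ = ψ₂ = ξ = q = 0 identically on [0,L]. -/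
/-! The velocity part determines a single function. Eliminating `q` and `ψ₁`, the component
`u = ψ₂` solves `ν u'''' = (m + ν k²) u'' - k² m u` with `m = λ + ν k²` and clamped boundary
conditions `u = u' = 0` at `0` and `L`. An energy argument (`clamped_energy`) forces `m < 0` unless
`u = 0`, so `m = -ν ω²` with `ω > 0`. Multiplying the equation by test functions `s` with
`s'' = τ s` (`test_identity`) produces linear relations between the boundary values `u''` and `u'''`:

* `s = sin ωx, cos ωx, sinh kx, cosh kx` show that `(u''(L), u'''(L), u''(0))` is a multiple of an
  explicit vector depending only on `k, ω`, and that `ω` is a zero of an entire function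
  `stokesDet L k`, unless all these values vanish (`boundary_data_zero`).
* `s = sin σx` with `σ² = ν(ω² + k²)/α - k²` is tested against the equations for both `u` and `ξ`;
  as `ξ(0) = ξ(L) = ξ'(L) = 0`, it gives one further relation, which says that `σ` is a zero of an
  entire function `obsFun L k ω` unless the boundary data vanish.

Neither entire function is identically zero, so both have countably many zeros. Hence the pairs
`(ω, σ)` of zeros, and with them the values `α = ν(ω² + k²)/(σ² + k²)`, form a countable set over
all `k ∈ ℤ \ {0}`. For `α` outside this set all Cauchy data of `u` at `L` vanish, so `u = 0`, and
then `ξ = 0` by uniqueness for its initial value problem at `L`. Since all coefficients are real,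
this is carried out for the real and imaginary parts separately. -/

open Set

/-- The mode-`k` eigen-system (S_k) for the adjoint linearized Boussinesq operator
on the channel `𝕋 × (0,L)`, for functions `ψ₁ ψ₂ ξ q : ℝ → ℂ` considered on `[0,L]`:
smoothness, the four ODEs on `(0,L)` and the homogeneous boundary conditions. -/
def SystemSk (ν α L lam : ℝ) (k : ℤ) (ψ₁ ψ₂ ξ q : ℝ → ℂ) : Prop :=
  ContDiff ℝ 4 ψ₁ ∧ ContDiff ℝ 4 ψ₂ ∧ ContDiff ℝ 6 ξ ∧ ContDiff ℝ 3 q ∧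
  (∀ x ∈ Set.Ioo (0:ℝ) L,
    ((lam : ℂ) + (ν : ℂ) * (k : ℂ)^2) * ψ₁ x - (ν : ℂ) * iteratedDeriv 2 ψ₁ x
      + Complex.I * (k : ℂ) * q x = 0) ∧
  (∀ x ∈ Set.Ioo (0:ℝ) L,
    ((lam : ℂ) + (ν : ℂ) * (k : ℂ)^2) * ψ₂ x - (ν : ℂ) * iteratedDeriv 2 ψ₂ x
      + deriv q x = 0) ∧
  (∀ x ∈ Set.Ioo (0:ℝ) L, Complex.I * (k : ℂ) * ψ₁ x + deriv ψ₂ x = 0) ∧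
  (∀ x ∈ Set.Ioo (0:ℝ) L,
    ((lam : ℂ) + (α : ℂ) * (k : ℂ)^2) * ξ x - (α : ℂ) * iteratedDeriv 2 ξ x = ψ₂ x) ∧
  ψ₁ 0 = 0 ∧ ψ₁ L = 0 ∧ ψ₂ 0 = 0 ∧ ψ₂ L = 0 ∧ ξ 0 = 0 ∧ ξ L = 0

/-! ### Zeros of analytic functions -/

lemma countable_zeros {f : ℝ → ℝ} (hf : ∀ x, AnalyticAt ℝ f x) {y : ℝ} (hy : f y ≠ 0) :
    {x | f x = 0}.Countable := by
  have hloc : ∀ x, {z | z ≠ x → f z ≠ 0} ∈ nhds x := by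
    intro x
    rcases (hf x).eventually_eq_zero_or_eventually_ne_zero with h | h
    · exfalso
      have hA : AnalyticOnNhd ℝ f Set.univ := fun x _ => hf x
      exact hy (hA.eqOn_zero_of_preconnected_of_eventuallyEq_zero isPreconnected_univ
        (Set.mem_univ x) h (Set.mem_univ y))
    · exact eventually_nhdsWithin_iff.1 h
  obtain ⟨s, hs, hcov⟩ := TopologicalSpace.countable_cover_nhds hloc
  refine hs.mono fun z hz => ?_
  have hzc : z ∈ ⋃ x ∈ s, {z | z ≠ x → f z ≠ 0} := hcov ▸ Set.mem_univ z
  simp only [Set.mem_iUnion] at hzc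
  obtain ⟨x, hx, hzx⟩ := hzc
  by_cases h : z = x
  · exact h ▸ hx
  · exact absurd hz (hzx h)

/-- Up to the factor `ωk`, the determinant of the two relations between `u''(L)` and `u'''(L)`
for clamped solutions of `(D² - k²)(D² + ω²) u = 0` on `[0,L]`. -/
noncomputable def stokesDet (L k ω : ℝ) : ℝ :=
  (ω * Real.sin (ω * L) + k * Real.sinh (k * L)) * (k * Real.sin (ω * L) - ω * Real.sinh (k * L))
    + (Real.cosh (k * L) - Real.cos (ω * L)) ^ 2 * (ω * k)

/-- The boundary expression `u''' s - u'' s'` between `0` and `L` for `s = sin σx`, where `u` is the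
clamped mode normalized by `u''(L) = cosh kL - cos ωL`. It is proportional to `∫₀ᴸ u(x) sin σx dx`
and vanishes when the observation `ξ'(L)` does. The last bracket is `u''(0)`. -/
noncomputable def obsFun (L k ω σ : ℝ) : ℝ :=
  (ω * Real.sin (ω * L) + k * Real.sinh (k * L)) * Real.sin (σ * L)
    - σ * ((Real.cosh (k * L) - Real.cos (ω * L)) * Real.cos (σ * L)
      - ((Real.cosh (k * L) - Real.cos (ω * L)) * Real.cos (ω * L)
        - (ω * Real.sin (ω * L) + k * Real.sinh (k * L)) * Real.sin (ω * L) / ω))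

lemma cosh_sub_cos_pos {L k : ℝ} (hL : 0 < L) (hk : k ≠ 0) (ω : ℝ) :
    0 < Real.cosh (k * L) - Real.cos (ω * L) := by
  have h1 : 1 < Real.cosh (k * L) := Real.one_lt_cosh.2 (mul_ne_zero hk hL.ne')
  linarith [Real.cos_le_one (ω * L)]

lemma countable_stokesDet {L k : ℝ} (hL : 0 < L) (hk : k ≠ 0) :
    {ω | stokesDet L k ω = 0}.Countable := by
  refine countable_zeros (y := Real.pi / L) (fun x => ?_) ?_
  · unfold stokesDet; fun_prop
  · have h1 : Real.pi / L * L = Real.pi := div_mul_cancel₀ _ hL.ne'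
    have h2 := Real.cosh_sq (k * L)
    have h3 : stokesDet L k (Real.pi / L)
        = (Real.pi / L) * k * (2 + 2 * Real.cosh (k * L)) := by
      simp only [stokesDet, h1, Real.sin_pi, Real.cos_pi]
      linear_combination (Real.pi / L) * k * h2
    rw [h3]
    have := Real.cosh_pos (k * L)
    have := Real.pi_pos
    positivity

lemma countable_obsFun {L k : ℝ} (hL : 0 < L) (hk : k ≠ 0) (ω : ℝ) :
    {σ | obsFun L k ω σ = 0}.Countable := by
  have hc := cosh_sub_cos_pos hL hk ω
  have han : ∀ σ, AnalyticAt ℝ (obsFun L k ω) σ := by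
    intro σ; unfold obsFun; fun_prop
  have hpi := Real.pi_pos
  have h1 : Real.pi / L * L = Real.pi := div_mul_cancel₀ _ hL.ne'
  have h2 : 2 * Real.pi / L * L = 2 * Real.pi := div_mul_cancel₀ _ (ne_of_gt hL)
  -- Vanishing at both `π/L` and `2π/L` would give `u''(L) = -u''(0)` and `u''(L) = u''(0)`.
  by_cases hA : obsFun L k ω (Real.pi / L) = 0
  · refine countable_zeros (y := 2 * Real.pi / L) han fun hB => ?_
    simp only [obsFun, h1, h2, Real.sin_pi, Real.cos_pi, Real.sin_two_pi, Real.cos_two_pi,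
      mul_zero, zero_sub, neg_eq_zero] at hA hB
    have hA' := (mul_eq_zero.1 hA).resolve_left (by positivity)
    have hB' := (mul_eq_zero.1 hB).resolve_left (by positivity)
    linarith
  · exact countable_zeros han hA

/-! ### Elementary facts about differentiable functions on `[0,L]` -/

lemma const_of_deriv_zero {L : ℝ} (hL : 0 < L) {f f' : ℝ → ℝ} (hf : ∀ x, HasDerivAt f (f' x) x)
    (h0 : ∀ x ∈ Set.Ioo 0 L, f' x = 0) : ∀ x ∈ Set.Icc 0 L, f x = f L := by
  have hc : ContinuousOn f (Set.Icc 0 L) := fun x _ => (hf x).continuousAt.continuousWithinAt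
  have hd : DifferentiableOn ℝ f (interior (Set.Icc 0 L)) :=
    fun x _ => (hf x).differentiableAt.differentiableWithinAt
  have hm := monotoneOn_of_deriv_nonneg (convex_Icc 0 L) hc hd
    (fun x hx => by rw [interior_Icc] at hx; rw [(hf x).deriv, h0 x hx])
  have ha := antitoneOn_of_deriv_nonpos (convex_Icc 0 L) hc hd
    (fun x hx => by rw [interior_Icc] at hx; rw [(hf x).deriv, h0 x hx])
  intro x hx
  have hLm : L ∈ Set.Icc 0 L := ⟨hL.le, le_rfl⟩
  exact le_antisymm (hm hx hLm hx.2) (ha hx hLm hx.2)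

lemma zero_on_Icc {E : Type*} [TopologicalSpace E] [T2Space E] [Zero E] {L : ℝ} (hL : 0 < L)
    {f : ℝ → E} (hf : Continuous f)
    (h0 : ∀ x ∈ Set.Ioo 0 L, f x = 0) : ∀ x ∈ Set.Icc 0 L, f x = 0 := by
  intro x hx
  rw [← closure_Ioo hL.ne] at hx
  exact closure_minimal (t := {x | f x = 0}) h0 (isClosed_eq hf continuous_const) hx

/-- Backward uniqueness for `y'' = c y`: the function `(y² + y'²) exp((1 + |c|) x)` is
nondecreasing and vanishes at `L`. -/
lemma second_order_unique {L c : ℝ} (hL : 0 < L) {y y' y'' : ℝ → ℝ}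
    (h1 : ∀ x, HasDerivAt y (y' x) x) (h2 : ∀ x, HasDerivAt y' (y'' x) x)
    (hode : ∀ x ∈ Set.Ioo 0 L, y'' x = c * y x) (hy : y L = 0) (hy' : y' L = 0) :
    ∀ x ∈ Set.Icc 0 L, y x = 0 := by
  have hD : ∀ x, HasDerivAt (fun x => (y x ^ 2 + y' x ^ 2) * Real.exp ((1 + |c|) * x))
      ((2 * y x * y' x + 2 * y' x * y'' x) * Real.exp ((1 + |c|) * x)
        + (y x ^ 2 + y' x ^ 2) * (Real.exp ((1 + |c|) * x) * (1 + |c|))) x := by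
    intro x
    have hexp : HasDerivAt (fun x => Real.exp ((1 + |c|) * x))
        (Real.exp ((1 + |c|) * x) * (1 + |c|)) x := by
      simpa using ((hasDerivAt_id x).const_mul (1 + |c|)).exp
    have := (((h1 x).pow 2).add ((h2 x).pow 2)).mul hexp
    refine this.congr_deriv ?_
    simp
  have hm := monotoneOn_of_deriv_nonneg (convex_Icc 0 L)
    (fun x _ => (hD x).continuousAt.continuousWithinAt)
    (fun x _ => (hD x).differentiableAt.differentiableWithinAt)
    (fun x hx => by
      rw [interior_Icc] at hx
      rw [(hD x).deriv, hode x hx]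
      have e := Real.exp_pos ((1 + |c|) * x)
      have key : 0 ≤ 2 * y x * y' x + 2 * y' x * (c * y x)
          + (y x ^ 2 + y' x ^ 2) * (1 + |c|) := by
        have a1 := sq_nonneg (y x + y' x)
        rcases abs_cases c with ⟨hc, hc'⟩ | ⟨hc, hc'⟩ <;> rw [hc]
        · nlinarith [mul_nonneg hc' a1]
        · nlinarith [mul_nonneg (neg_nonneg.2 hc'.le) (sq_nonneg (y x - y' x))]
      nlinarith [mul_nonneg key e.le])
  intro x hx
  have := hm hx ⟨hL.le, le_rfl⟩ hx.2
  simp only [hy, hy'] at this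
  have e := Real.exp_pos ((1 + |c|) * x)
  have h3 : y x ^ 2 + y' x ^ 2 ≤ 0 := by
    by_contra hcon
    push Not at hcon
    nlinarith [mul_pos hcon e]
  nlinarith [sq_nonneg (y x), sq_nonneg (y' x), pow_eq_zero_iff (two_ne_zero) (a := y x)]

/-! ### The clamped fourth order equation -/

/-- A clamped solution of `u'''' = (p + k²) u'' - k² p u` with `p ≥ 0` vanishes: the function
`u''' u - u'' u' - (p + k²) u' u` is nonincreasing and vanishes at both ends. -/
lemma clamped_energy {L k p : ℝ} (hL : 0 < L) (hk : k ≠ 0) (hp : 0 ≤ p)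
    {u u1 u2 u3 u4 : ℝ → ℝ}
    (h1 : ∀ x, HasDerivAt u (u1 x) x) (h2 : ∀ x, HasDerivAt u1 (u2 x) x)
    (h3 : ∀ x, HasDerivAt u2 (u3 x) x) (h4 : ∀ x, HasDerivAt u3 (u4 x) x)
    (hode : ∀ x ∈ Set.Ioo 0 L, u4 x = (p + k ^ 2) * u2 x - k ^ 2 * p * u x)
    (u00 : u 0 = 0) (u0L : u L = 0) (u10 : u1 0 = 0) (u1L : u1 L = 0) :
    ∀ x ∈ Set.Icc 0 L, u x = 0 := by
  have hD : ∀ x, HasDerivAt (fun x => u3 x * u x - u2 x * u1 x - (p + k ^ 2) * (u1 x * u x))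
      (u4 x * u x + u3 x * u1 x - (u3 x * u1 x + u2 x * u2 x)
        - (p + k ^ 2) * (u2 x * u x + u1 x * u1 x)) x := fun x =>
    (((h4 x).mul (h1 x)).sub ((h3 x).mul (h2 x))).sub (((h2 x).mul (h1 x)).const_mul _)
  have hval : ∀ x ∈ Set.Ioo 0 L, u4 x * u x + u3 x * u1 x - (u3 x * u1 x + u2 x * u2 x)
        - (p + k ^ 2) * (u2 x * u x + u1 x * u1 x)
        = -(k ^ 2 * p * u x ^ 2 + u2 x ^ 2 + (p + k ^ 2) * u1 x ^ 2) := by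
    intro x hx
    rw [hode x hx]; ring
  have ha := antitoneOn_of_deriv_nonpos (convex_Icc 0 L)
    (fun x _ => (hD x).continuousAt.continuousWithinAt)
    (fun x _ => (hD x).differentiableAt.differentiableWithinAt)
    (fun x hx => by
      rw [interior_Icc] at hx
      rw [(hD x).deriv, hval x hx]
      have : 0 ≤ k ^ 2 * p * u x ^ 2 + u2 x ^ 2 + (p + k ^ 2) * u1 x ^ 2 := by positivity
      linarith)
  have hz : ∀ x ∈ Set.Icc 0 L,
      u3 x * u x - u2 x * u1 x - (p + k ^ 2) * (u1 x * u x) = 0 := by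
    intro x hx
    have a := ha ⟨le_rfl, hL.le⟩ hx hx.1
    have b := ha hx ⟨hL.le, le_rfl⟩ hx.2
    simp only [u00, u0L, u10, u1L] at a b
    linarith
  have hu1 : ∀ x ∈ Set.Ioo 0 L, u1 x = 0 := by
    intro x hx
    have hev : (fun x => u3 x * u x - u2 x * u1 x - (p + k ^ 2) * (u1 x * u x))
        =ᶠ[nhds x] fun _ => 0 := by
      filter_upwards [Ioo_mem_nhds hx.1 hx.2] with z hz'
      exact hz z ⟨hz'.1.le, hz'.2.le⟩
    have hd := (hD x).unique ((hasDerivAt_const x (0 : ℝ)).congr_of_eventuallyEq hev)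
    rw [hval x hx] at hd
    have hk2 : 0 < k ^ 2 := by positivity
    have t1 : 0 ≤ k ^ 2 * p * u x ^ 2 := by positivity
    have t2 : 0 ≤ p * u1 x ^ 2 := by positivity
    have t3 : k ^ 2 * u1 x ^ 2 ≤ 0 := by nlinarith [sq_nonneg (u2 x)]
    have t4 : u1 x ^ 2 ≤ 0 := by
      by_contra hcon
      push Not at hcon
      nlinarith [mul_pos hk2 hcon]
    exact pow_eq_zero_iff two_ne_zero |>.1 (le_antisymm t4 (sq_nonneg _))
  intro x hx
  rw [const_of_deriv_zero hL h1 hu1 x hx, u0L]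

/-- Integration of `(D² - k²)(D² + ω²) u = 0` against a test function `s` with `s'' = τ s`; the
remaining multiple of `∫ u s` is carried by a primitive `Y`. -/
lemma test_identity {L k ω τ : ℝ} (hL : 0 < L) {u u1 u2 u3 u4 s s1 Y Y' : ℝ → ℝ}
    (h1 : ∀ x, HasDerivAt u (u1 x) x) (h2 : ∀ x, HasDerivAt u1 (u2 x) x)
    (h3 : ∀ x, HasDerivAt u2 (u3 x) x) (h4 : ∀ x, HasDerivAt u3 (u4 x) x)
    (hode : ∀ x ∈ Set.Ioo 0 L, u4 x = (k ^ 2 - ω ^ 2) * u2 x + k ^ 2 * ω ^ 2 * u x)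
    (u00 : u 0 = 0) (u0L : u L = 0) (u10 : u1 0 = 0) (u1L : u1 L = 0)
    (hs : ∀ x, HasDerivAt s (s1 x) x) (hs1 : ∀ x, HasDerivAt s1 (τ * s x) x)
    (hY : ∀ x, HasDerivAt Y (Y' x) x)
    (hY' : ∀ x ∈ Set.Ioo 0 L, Y' x = (τ - k ^ 2) * (τ + ω ^ 2) * u x * s x) :
    u3 0 * s 0 - u2 0 * s1 0 + Y 0 = u3 L * s L - u2 L * s1 L + Y L := by
  have hD : ∀ x, HasDerivAt
      (fun x => u3 x * s x - u2 x * s1 x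
        + (ω ^ 2 - k ^ 2 + τ) * (u1 x * s x - u x * s1 x) + Y x)
      (u4 x * s x + u3 x * s1 x - (u3 x * s1 x + u2 x * (τ * s x))
        + (ω ^ 2 - k ^ 2 + τ) * (u2 x * s x + u1 x * s1 x - (u1 x * s1 x + u x * (τ * s x)))
        + Y' x) x := fun x =>
    ((((h4 x).mul (hs x)).sub ((h3 x).mul (hs1 x))).add
      ((((h2 x).mul (hs x)).sub ((h1 x).mul (hs1 x))).const_mul _)).add (hY x)
  have := const_of_deriv_zero hL hD (fun x hx => by rw [hode x hx, hY' x hx]; ring) 0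
    ⟨le_rfl, hL.le⟩
  simpa [u00, u0L, u10, u1L] using this

lemma hasDerivAt_sin_mul (a x : ℝ) :
    HasDerivAt (fun x => Real.sin (a * x)) (a * Real.cos (a * x)) x := by
  simpa [mul_comm] using ((hasDerivAt_id x).const_mul a).sin

lemma hasDerivAt_cos_mul (a x : ℝ) :
    HasDerivAt (fun x => Real.cos (a * x)) (-(a * Real.sin (a * x))) x := by
  simpa [mul_comm] using ((hasDerivAt_id x).const_mul a).cos

lemma hasDerivAt_sinh_mul (a x : ℝ) :
    HasDerivAt (fun x => Real.sinh (a * x)) (a * Real.cosh (a * x)) x := by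
  simpa [mul_comm] using ((hasDerivAt_id x).const_mul a).sinh

lemma hasDerivAt_cosh_mul (a x : ℝ) :
    HasDerivAt (fun x => Real.cosh (a * x)) (a * Real.sinh (a * x)) x := by
  simpa [mul_comm] using ((hasDerivAt_id x).const_mul a).cosh

/-- The linear algebra behind the choice of the exceptional set. Here `A = u'''(L)`, `B = u''(L)`,
`C = u''(0)`, `D = u'''(0)`, and the hypotheses are the relations obtained from the test functions
`sin ωx`, `cos ωx`, `sinh kx`, `cosh kx` and `sin σx`. -/
lemma boundary_data_zero {L k ω σ A B C D : ℝ} (hL : 0 < L) (hk : k ≠ 0) (hω : 0 < ω)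
    (e1 : -C * ω = A * Real.sin (ω * L) - B * (ω * Real.cos (ω * L)))
    (e2 : D = A * Real.cos (ω * L) + B * (ω * Real.sin (ω * L)))
    (e3 : -C * k = A * Real.sinh (k * L) - B * (k * Real.cosh (k * L)))
    (e4 : D = A * Real.cosh (k * L) - B * (k * Real.sinh (k * L)))
    (e5 : -C * σ = A * Real.sin (σ * L) - B * (σ * Real.cos (σ * L)))
    (hN : stokesDet L k ω = 0 → obsFun L k ω σ ≠ 0) : A = 0 ∧ B = 0 := by
  have hc := cosh_sub_cos_pos hL hk ω
  have hA : A * (Real.cosh (k * L) - Real.cos (ω * L))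
      = B * (ω * Real.sin (ω * L) + k * Real.sinh (k * L)) := by linear_combination e2 - e4
  have hB : B = 0 := by
    by_contra hB
    have hdet : B * stokesDet L k ω = 0 := by
      unfold stokesDet
      linear_combination (-(k * Real.sin (ω * L) - ω * Real.sinh (k * L))) * hA
        - (Real.cosh (k * L) - Real.cos (ω * L)) * (k * e1 - ω * e3)
    refine hN ((mul_eq_zero.1 hdet).resolve_left hB) ?_
    have hC : C = B * Real.cos (ω * L) - A * Real.sin (ω * L) / ω := by
      field_simp
      linear_combination -e1
    have hobs : B * obsFun L k ω σ = 0 := by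
      unfold obsFun
      rw [hC] at e5
      linear_combination (-(Real.sin (σ * L) - σ * Real.sin (ω * L) / ω)) * hA
        - (Real.cosh (k * L) - Real.cos (ω * L)) * e5
    exact (mul_eq_zero.1 hobs).resolve_left hB
  refine ⟨?_, hB⟩
  rw [hB, zero_mul] at hA
  exact (mul_eq_zero.1 hA).resolve_right (ne_of_gt hc)

/-! ### The real system -/

/-- Unique continuation for a real-valued pair `(u, ξ)`, where `u` stands for the vertical velocity
component after elimination of `ψ₁` and `q`. -/
lemma real_unique {ν α L lam k : ℝ} (hν : 0 < ν) (hL : 0 < L) (hα : 0 < α) (hαν : α < ν)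
    (hk : k ≠ 0)
    (hN : ∀ ω σ, 0 < ω → α = ν * (ω ^ 2 + k ^ 2) / (σ ^ 2 + k ^ 2) → stokesDet L k ω = 0 →
      obsFun L k ω σ ≠ 0)
    {u u1 u2 u3 u4 ξ ξ1 ξ2 : ℝ → ℝ}
    (h1 : ∀ x, HasDerivAt u (u1 x) x) (h2 : ∀ x, HasDerivAt u1 (u2 x) x)
    (h3 : ∀ x, HasDerivAt u2 (u3 x) x) (h4 : ∀ x, HasDerivAt u3 (u4 x) x)
    (hode : ∀ x ∈ Set.Ioo 0 L, ν * u4 x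
      = (lam + 2 * ν * k ^ 2) * u2 x - k ^ 2 * (lam + ν * k ^ 2) * u x)
    (u00 : u 0 = 0) (u0L : u L = 0) (u10 : u1 0 = 0) (u1L : u1 L = 0)
    (g1 : ∀ x, HasDerivAt ξ (ξ1 x) x) (g2 : ∀ x, HasDerivAt ξ1 (ξ2 x) x)
    (hξ : ∀ x ∈ Set.Ioo 0 L, (lam + α * k ^ 2) * ξ x - α * ξ2 x = u x)
    (ξ00 : ξ 0 = 0) (ξ0L : ξ L = 0) (ξ1L : ξ1 L = 0) :
    ∀ x ∈ Set.Icc 0 L, u x = 0 ∧ ξ x = 0 := by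
  have hu : ∀ x ∈ Set.Icc 0 L, u x = 0 := by
    rcases le_or_gt 0 (lam + ν * k ^ 2) with hm | hm
    · refine clamped_energy (p := (lam + ν * k ^ 2) / ν) hL hk (by positivity) h1 h2 h3 h4
        (fun x hx => ?_) u00 u0L u10 u1L
      field_simp
      linear_combination hode x hx
    · obtain ⟨ω, hω, hωm⟩ : ∃ ω : ℝ, 0 < ω ∧ ν * ω ^ 2 = -(lam + ν * k ^ 2) := by
        have hpos : 0 < -(lam + ν * k ^ 2) / ν := div_pos (by linarith) hν
        exact ⟨√(-(lam + ν * k ^ 2) / ν), Real.sqrt_pos.2 hpos, by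
          rw [Real.sq_sqrt hpos.le]; field_simp⟩
      have hk2 : 0 < k ^ 2 := by positivity
      obtain ⟨σ, hσ⟩ : ∃ σ : ℝ, α * (σ ^ 2 + k ^ 2) = ν * (ω ^ 2 + k ^ 2) := by
        have hpos : 0 ≤ ν * (ω ^ 2 + k ^ 2) / α - k ^ 2 := by
          rw [sub_nonneg, le_div_iff₀ hα]
          nlinarith [mul_pos hν (pow_pos hω 2)]
        exact ⟨√(ν * (ω ^ 2 + k ^ 2) / α - k ^ 2), by
          rw [Real.sq_sqrt hpos]; field_simp; ring⟩
      have hode' : ∀ x ∈ Set.Ioo 0 L,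
          u4 x = (k ^ 2 - ω ^ 2) * u2 x + k ^ 2 * ω ^ 2 * u x := by
        intro x hx
        apply mul_left_cancel₀ hν.ne'
        linear_combination hode x hx + (u2 x - k ^ 2 * u x) * hωm
      have hzero : ∀ x : ℝ, HasDerivAt (fun _ : ℝ => (0 : ℝ)) ((fun _ => 0 : ℝ → ℝ) x) x :=
        fun x => hasDerivAt_const x 0
      have e1 := test_identity (s := fun x => Real.sin (ω * x)) (τ := -ω ^ 2) hL h1 h2 h3 h4 hode'
        u00 u0L u10 u1L (hasDerivAt_sin_mul ω)
        (fun x => ((hasDerivAt_cos_mul ω x).const_mul ω).congr_deriv (by ring)) hzero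
        (fun x _ => by ring)
      have e2 := test_identity (s := fun x => Real.cos (ω * x)) (τ := -ω ^ 2) hL h1 h2 h3 h4 hode'
        u00 u0L u10 u1L (hasDerivAt_cos_mul ω)
        (fun x => ((hasDerivAt_sin_mul ω x).const_mul ω).neg.congr_deriv (by ring)) hzero
        (fun x _ => by ring)
      have e3 := test_identity (s := fun x => Real.sinh (k * x)) (τ := k ^ 2) hL h1 h2 h3 h4 hode'
        u00 u0L u10 u1L (hasDerivAt_sinh_mul k)
        (fun x => ((hasDerivAt_cosh_mul k x).const_mul k).congr_deriv (by ring)) hzero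
        (fun x _ => by ring)
      have e4 := test_identity (s := fun x => Real.cosh (k * x)) (τ := k ^ 2) hL h1 h2 h3 h4 hode'
        u00 u0L u10 u1L (hasDerivAt_cosh_mul k)
        (fun x => ((hasDerivAt_sinh_mul k x).const_mul k).congr_deriv (by ring)) hzero
        (fun x _ => by ring)
      have hs1 : ∀ x, HasDerivAt (fun x => σ * Real.cos (σ * x))
          (-σ ^ 2 * Real.sin (σ * x)) x := fun x =>
        ((hasDerivAt_cos_mul σ x).const_mul σ).congr_deriv (by ring)
      -- By the equation for `ξ`, a primitive of `u sin σx` is `-α (ξ' sin σx - ξ (sin σx)')`.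
      have e5 := test_identity (s := fun x => Real.sin (σ * x)) (τ := -σ ^ 2)
        (Y := fun x => (-σ ^ 2 - k ^ 2) * (-σ ^ 2 + ω ^ 2) * (-α)
          * (ξ1 x * Real.sin (σ * x) - ξ x * (σ * Real.cos (σ * x)))) hL h1 h2 h3 h4 hode'
        u00 u0L u10 u1L (hasDerivAt_sin_mul σ) hs1
        (fun x => (((g2 x).mul (hasDerivAt_sin_mul σ x)).sub ((g1 x).mul (hs1 x))).const_mul _)
        (fun x hx => by
          have hx' := hξ x hx
          linear_combination (-σ ^ 2 - k ^ 2) * (-σ ^ 2 + ω ^ 2) * Real.sin (σ * x) *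
            (hx' - ξ x * hσ - ξ x * hωm))
      simp only [ξ00, ξ0L, ξ1L, mul_zero, Real.sin_zero, Real.cos_zero, Real.sinh_zero,
        Real.cosh_zero, zero_mul, sub_zero, add_zero, mul_one, zero_sub, neg_zero] at e1 e2 e3 e4 e5
      obtain ⟨hA, hB⟩ := boundary_data_zero (σ := σ) (A := u3 L) (B := u2 L) (C := u2 0)
        (D := u3 0) hL hk hω
        (by linear_combination e1) (by linear_combination e2) (by linear_combination e3)
        (by linear_combination e4) (by linear_combination e5)
        (hN ω σ hω (by rw [eq_div_iff (by positivity)]; exact hσ))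
      -- `u'' - k² u` solves `y'' = -ω² y` with zero Cauchy data at `L`.
      have hv : ∀ x ∈ Set.Icc 0 L, u2 x - k ^ 2 * u x = 0 :=
        second_order_unique (c := -ω ^ 2) hL
          (fun x => (h3 x).sub ((h1 x).const_mul (k ^ 2)))
          (fun x => (h4 x).sub ((h2 x).const_mul (k ^ 2)))
          (fun x hx => by rw [hode' x hx]; ring) (by rw [hB, u0L]; ring) (by rw [hA, u1L]; ring)
      exact second_order_unique (c := k ^ 2) hL h1 h2
        (fun x hx => by linear_combination hv x ⟨hx.1.le, hx.2.le⟩) u0L u1L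
  intro x hx
  refine ⟨hu x hx, second_order_unique (c := (lam + α * k ^ 2) / α) hL g1 g2
    (fun z hz => ?_) ξ0L ξ1L x hx⟩
  have h := hξ z hz
  rw [hu z ⟨hz.1.le, hz.2.le⟩] at h
  field_simp
  linear_combination -h

/-! ### Reduction of the complex system -/

lemma hasDerivAt_re {f : ℝ → ℂ} {f' : ℂ} {x : ℝ} (h : HasDerivAt f f' x) :
    HasDerivAt (fun x => (f x).re) f'.re x :=
  (Complex.reCLM.hasFDerivAt.comp_hasDerivAt x h :)

lemma hasDerivAt_im {f : ℝ → ℂ} {f' : ℂ} {x : ℝ} (h : HasDerivAt f f' x) :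
    HasDerivAt (fun x => (f x).im) f'.im x :=
  (Complex.imCLM.hasFDerivAt.comp_hasDerivAt x h :)

lemma hasDerivAt_iteratedDeriv {f : ℝ → ℂ} {n : ℕ} (hf : ContDiff ℝ n f) (m : ℕ) (hm : m < n)
    (x : ℝ) : HasDerivAt (iteratedDeriv m f) (iteratedDeriv (m + 1) f x) x := by
  rw [iteratedDeriv_succ]
  exact ((hf.differentiable_iteratedDeriv m (by exact_mod_cast hm)) x).hasDerivAt

/-- Two functions that agree on `(0,L)` have the same derivatives there. -/
lemma hasDerivAt_eq_on_Ioo {L : ℝ} {f g f' g' : ℝ → ℂ} (hf : ∀ x, HasDerivAt f (f' x) x)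
    (hg : ∀ x, HasDerivAt g (g' x) x) (h : ∀ x ∈ Set.Ioo 0 L, f x = g x) :
    ∀ x ∈ Set.Ioo 0 L, f' x = g' x := by
  intro x hx
  refine (hf x).unique ((hg x).congr_of_eventuallyEq ?_)
  filter_upwards [Ioo_mem_nhds hx.1 hx.2] with z hz
  exact h z hz

/-- Unique continuation for the mode-`k` adjoint Boussinesq eigen-system:
there is an at most countable set `N ⊆ (0,ν)` such that for every diffusion
coefficient `α ∈ (0,ν) \ N`, any solution of (S_k) (for `k ≠ 0`) with the
extra observation `ξ'(L) = 0` vanishes identically on `[0,L]`. -/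
theorem unique_continuation_Sk (ν L : ℝ) (hν : 0 < ν) (hL : 0 < L) :
    ∃ N : Set ℝ, N.Countable ∧ N ⊆ Set.Ioo 0 ν ∧
      ∀ α ∈ Set.Ioo 0 ν \ N, ∀ (k : ℤ), k ≠ 0 → ∀ (lam : ℝ) (ψ₁ ψ₂ ξ q : ℝ → ℂ),
        SystemSk ν α L lam k ψ₁ ψ₂ ξ q → deriv ξ L = 0 →
        ∀ x ∈ Set.Icc (0:ℝ) L, ψ₁ x = 0 ∧ ψ₂ x = 0 ∧ ξ x = 0 ∧ q x = 0 := by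
  refine ⟨(⋃ k ∈ {k : ℤ | k ≠ 0}, ⋃ ω ∈ {ω | stokesDet L k ω = 0},
    (fun σ : ℝ => ν * (ω ^ 2 + (k : ℝ) ^ 2) / (σ ^ 2 + (k : ℝ) ^ 2)) ''
      {σ | obsFun L k ω σ = 0}) ∩ Set.Ioo 0 ν, ?_, Set.inter_subset_right, ?_⟩
  · refine Set.Countable.mono Set.inter_subset_left ?_
    refine (Set.to_countable _).biUnion fun k hk => ?_
    have hk' : (k : ℝ) ≠ 0 := Int.cast_ne_zero.2 hk
    exact (countable_stokesDet hL hk').biUnion fun ω _ => (countable_obsFun hL hk' ω).image _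
  rintro α ⟨hα, hαN⟩ k hk lam ψ₁ ψ₂ ξ q
    ⟨c1, c2, c3, c4, s1, s2, s3, s4, b1, b2, b3, b4, b5, b6⟩ hobs
  have hkR : (k : ℝ) ≠ 0 := Int.cast_ne_zero.2 hk
  have hkC : (k : ℂ) ≠ 0 := Int.cast_ne_zero.2 hk
  have hN : ∀ ω σ, 0 < ω →
      α = ν * (ω ^ 2 + (k : ℝ) ^ 2) / (σ ^ 2 + (k : ℝ) ^ 2) → stokesDet L k ω = 0 →
      obsFun L k ω σ ≠ 0 := by
    intro ω σ _ hασ hd ho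
    refine hαN ⟨?_, hα⟩
    simp only [Set.mem_iUnion]
    exact ⟨k, hk, ω, hd, σ, ho, hασ.symm⟩
  have d1 := hasDerivAt_iteratedDeriv (n := 4) c1
  have d2 := hasDerivAt_iteratedDeriv (n := 4) c2
  have d3 := hasDerivAt_iteratedDeriv (n := 6) c3
  have d4 := hasDerivAt_iteratedDeriv (n := 3) c4
  -- Derivatives of the divergence equation, used to eliminate `ψ₁`.
  have i0 : ∀ x ∈ Set.Ioo 0 L,
      iteratedDeriv 1 ψ₂ x = -(Complex.I * k) * iteratedDeriv 0 ψ₁ x := fun x hx => by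
    rw [iteratedDeriv_one, iteratedDeriv_zero]
    linear_combination s3 x hx
  have i1 := hasDerivAt_eq_on_Ioo (d2 1 (by norm_num))
    (fun x => (d1 0 (by norm_num) x).const_mul _) i0
  have i2 := hasDerivAt_eq_on_Ioo (d2 2 (by norm_num))
    (fun x => (d1 1 (by norm_num) x).const_mul _) i1
  have i3 := hasDerivAt_eq_on_Ioo (d2 3 (by norm_num))
    (fun x => (d1 2 (by norm_num) x).const_mul _) i2
  have iq := hasDerivAt_eq_on_Ioo (L := L)
    (f := fun x => Complex.I * k * iteratedDeriv 0 q x)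
    (g := fun x => (ν : ℂ) * iteratedDeriv 2 ψ₁ x
      - ((lam : ℂ) + (ν : ℂ) * (k : ℂ)^2) * iteratedDeriv 0 ψ₁ x)
    (fun x => (d4 0 (by norm_num) x).const_mul _)
    (fun x => ((d1 2 (by norm_num) x).const_mul _).sub ((d1 0 (by norm_num) x).const_mul _))
    (fun x hx => by
      rw [iteratedDeriv_zero, iteratedDeriv_zero]
      linear_combination s1 x hx)
  have hode : ∀ x ∈ Set.Ioo 0 L, ((ν : ℝ) : ℂ) * iteratedDeriv 4 ψ₂ x
      = ((lam + 2 * ν * (k : ℝ) ^ 2 : ℝ) : ℂ) * iteratedDeriv 2 ψ₂ x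
        - (((k : ℝ) ^ 2 * (lam + ν * (k : ℝ) ^ 2) : ℝ) : ℂ) * iteratedDeriv 0 ψ₂ x := by
    intro x hx
    have q1 := iq x hx
    have q2 := s2 x hx
    have j1 := i1 x hx
    have j3 := i3 x hx
    simp only [zero_add, Nat.reduceAdd] at q1 j1 j3
    rw [← iteratedDeriv_one] at q2
    rw [iteratedDeriv_zero]
    push_cast
    linear_combination ν * j3 + Complex.I * k * q1 - (lam + ν * (k : ℂ) ^ 2) * j1
      + (k : ℂ) ^ 2 * q2 - (k : ℂ) ^ 2 * iteratedDeriv 1 q x * Complex.I_sq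
  have hξ : ∀ x ∈ Set.Ioo 0 L, ((lam + α * (k : ℝ) ^ 2 : ℝ) : ℂ) * iteratedDeriv 0 ξ x
      - (α : ℂ) * iteratedDeriv 2 ξ x = iteratedDeriv 0 ψ₂ x := by
    intro x hx
    rw [iteratedDeriv_zero, iteratedDeriv_zero]
    push_cast
    exact s4 x hx
  have i0' : ∀ x ∈ Set.Icc 0 L, deriv ψ₂ x + Complex.I * k * ψ₁ x = 0 := by
    refine zero_on_Icc hL ?_ fun x hx => by linear_combination s3 x hx
    exact (c2.continuous_deriv (by norm_num)).add (continuous_const.mul c1.continuous)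
  have t0 : iteratedDeriv 1 ψ₂ 0 = 0 := by
    have := i0' 0 ⟨le_rfl, hL.le⟩
    rwa [b1, mul_zero, add_zero, ← iteratedDeriv_one] at this
  have tL : iteratedDeriv 1 ψ₂ L = 0 := by
    have := i0' L ⟨hL.le, le_rfl⟩
    rwa [b2, mul_zero, add_zero, ← iteratedDeriv_one] at this
  rw [← iteratedDeriv_one] at hobs
  have hre := real_unique hν hL hα.1 hα.2 hkR hN
    (fun x => hasDerivAt_re (d2 0 (by norm_num) x)) (fun x => hasDerivAt_re (d2 1 (by norm_num) x))
    (fun x => hasDerivAt_re (d2 2 (by norm_num) x)) (fun x => hasDerivAt_re (d2 3 (by norm_num) x))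
    (fun x hx => by
      have := congrArg Complex.re (hode x hx)
      rwa [Complex.sub_re, Complex.re_ofReal_mul, Complex.re_ofReal_mul,
        Complex.re_ofReal_mul] at this)
    (by simp [b3]) (by simp [b4]) (by simp [t0]) (by simp [tL])
    (fun x => hasDerivAt_re (d3 0 (by norm_num) x)) (fun x => hasDerivAt_re (d3 1 (by norm_num) x))
    (fun x hx => by
      have := congrArg Complex.re (hξ x hx)
      rwa [Complex.sub_re, Complex.re_ofReal_mul, Complex.re_ofReal_mul] at this)
    (by simp [b5]) (by simp [b6]) (by simp [hobs])
  have him := real_unique hν hL hα.1 hα.2 hkR hN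
    (fun x => hasDerivAt_im (d2 0 (by norm_num) x)) (fun x => hasDerivAt_im (d2 1 (by norm_num) x))
    (fun x => hasDerivAt_im (d2 2 (by norm_num) x)) (fun x => hasDerivAt_im (d2 3 (by norm_num) x))
    (fun x hx => by
      have := congrArg Complex.im (hode x hx)
      rwa [Complex.sub_im, Complex.im_ofReal_mul, Complex.im_ofReal_mul,
        Complex.im_ofReal_mul] at this)
    (by simp [b3]) (by simp [b4]) (by simp [t0]) (by simp [tL])
    (fun x => hasDerivAt_im (d3 0 (by norm_num) x)) (fun x => hasDerivAt_im (d3 1 (by norm_num) x))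
    (fun x hx => by
      have := congrArg Complex.im (hξ x hx)
      rwa [Complex.sub_im, Complex.im_ofReal_mul, Complex.im_ofReal_mul] at this)
    (by simp [b5]) (by simp [b6]) (by simp [hobs])
  simp only [iteratedDeriv_zero] at hre him
  have z2 : ∀ x ∈ Set.Icc 0 L, ψ₂ x = 0 := fun x hx => Complex.ext (hre x hx).1 (him x hx).1
  have zξ : ∀ x ∈ Set.Icc 0 L, ξ x = 0 := fun x hx => Complex.ext (hre x hx).2 (him x hx).2
  have z2' := hasDerivAt_eq_on_Ioo (L := L) (d2 0 (by norm_num))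
    (fun x => hasDerivAt_const x (0 : ℂ))
    (fun x hx => by rw [iteratedDeriv_zero, z2 x ⟨hx.1.le, hx.2.le⟩])
  have z1o : ∀ x ∈ Set.Ioo 0 L, ψ₁ x = 0 := by
    intro x hx
    have h := i0 x hx
    rw [z2' x hx, iteratedDeriv_zero] at h
    exact (mul_eq_zero.1 h.symm).resolve_left
      (neg_ne_zero.2 (mul_ne_zero Complex.I_ne_zero hkC))
  have z1' := hasDerivAt_eq_on_Ioo (L := L) (d1 0 (by norm_num))
    (fun x => hasDerivAt_const x (0 : ℂ))
    (fun x hx => by rw [iteratedDeriv_zero, z1o x hx])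
  have z1'' := hasDerivAt_eq_on_Ioo (L := L) (d1 1 (by norm_num))
    (fun x => hasDerivAt_const x (0 : ℂ)) (fun x hx => z1' x hx)
  have zq : ∀ x ∈ Set.Ioo 0 L, q x = 0 := by
    intro x hx
    have h := s1 x hx
    rw [z1o x hx, z1'' x hx, mul_zero, mul_zero, sub_zero, zero_add] at h
    exact (mul_eq_zero.1 h).resolve_left (mul_ne_zero Complex.I_ne_zero hkC)
  intro x hx
  exact ⟨zero_on_Icc hL c1.continuous z1o x hx, z2 x hx, zξ x hx,
    zero_on_Icc hL c4.continuous zq x hx⟩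
end

section
/- Unique continuation with two observations (Remark 3.6): Let ν, α, L > 0 with α ≠ ν. For every k ∈ ℤ \ {0}, every λ ∈ ℝ, and all functions ψ₁, ψ₂, ξ, q : [0,L] → ℂ which are sufficiently smooth (ψ₁, ψ₂ of class C⁴, q of class C³, ξ of class C⁶ on [0,L]) and satisfy the system (S_k) together with the two observation conditions q(L) = 0 and ξ'(L) = 0, one has ψ₁ = ψ₂ = ξ = q = 0 identically on [0,L]. -/
/-!
Write `p = ψ₂`, `r = p'`, `s = r'`, `σ = lam + ν k²` and `w = ν s - σ p`. The Stokes part of the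
system says `q' = w` and `w' = k² q`, and incompressibility turns the boundary conditions into
`p = r = 0` at both ends, so that `w = ν s` there.

* Since `w ± k q` solves `u' = ± k u` and `q L = 0`, one gets `w 0 = cosh (k L) * w L`.
* The fourth-order equation for `p` has constant coefficients and only even-order terms, so
  `r (k² q + σ r) - ν s² / 2 - (σ + ν k²) r² / 2 + σ k² p² / 2` is constant on `[0, L]`.
  Comparing its values at the two ends gives `s 0 ^ 2 = s L ^ 2`.

As `cosh (k L) ^ 2 ≠ 1`, these force `w L = 0`. Then `q = w = 0`, and `p` solves `ν p'' = σ p` with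
zero Cauchy data at `L`, hence vanishes; finally `ξ` solves a homogeneous second-order equation
with zero Cauchy data at `L`, thanks to the second observation. Uniqueness for these constant
coefficient equations comes from `u' = c u` having only the solutions `C exp (c x)`
(`eq_exp_of_linear_ode`), after factoring `D² - c²` as `(D + c) (D - c)`.
-/

open Set

lemma eqOn_Icc_of_eqOn_Ioo {L : ℝ} (hL : 0 < L) {f g : ℝ → ℂ} (hf : Continuous f)
    (hg : Continuous g) (h : ∀ x ∈ Set.Ioo (0:ℝ) L, f x = g x) :
    ∀ x ∈ Set.Icc (0:ℝ) L, f x = g x := by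
  have h1 : Set.EqOn f g (closure (Set.Ioo (0:ℝ) L)) := Set.EqOn.closure h hf hg
  rw [closure_Ioo hL.ne] at h1
  exact h1

lemma eq_endpoint_of_deriv_zero {L : ℝ} (hL : 0 < L) {f : ℝ → ℂ} (hf : Continuous f)
    (h : ∀ x ∈ Set.Ioo (0:ℝ) L, HasDerivAt f 0 x) :
    ∀ x ∈ Set.Icc (0:ℝ) L, f x = f L := by
  obtain ⟨c, hc⟩ := isOpen_Ioo.exists_is_const_of_deriv_eq_zero
    (isPreconnected_Ioo (a := (0:ℝ)) (b := L))
    (fun x hx => (h x hx).differentiableAt.differentiableWithinAt)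
    (fun x hx => (h x hx).deriv)
  have h2 := eqOn_Icc_of_eqOn_Ioo hL hf (continuous_const (y := c)) hc
  intro x hx
  rw [h2 x hx, h2 L ⟨hL.le, le_rfl⟩]

lemma eq_exp_of_linear_ode {L : ℝ} (hL : 0 < L) {u : ℝ → ℂ} (c : ℂ) (hu : Continuous u)
    (h : ∀ x ∈ Set.Ioo (0:ℝ) L, HasDerivAt u (c * u x) x) :
    ∀ x ∈ Set.Icc (0:ℝ) L, u x = Complex.exp (c * (x - L)) * u L := by
  have hE : ∀ x : ℝ, HasDerivAt (fun y : ℝ => Complex.exp (-c * (y - L)))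
      (Complex.exp (-c * (x - L)) * (-c)) x := by
    intro x
    have h1 : HasDerivAt (fun y : ℝ => -c * ((y:ℂ) - L)) (-c) x := by
      simpa using ((Complex.ofRealCLM.hasDerivAt (x := x)).sub_const (L:ℂ)).const_mul (-c)
    exact h1.cexp
  have key := eq_endpoint_of_deriv_zero hL (f := fun y : ℝ => Complex.exp (-c * (y - L)) * u y)
    (by fun_prop) (by
      intro x hx
      refine ((hE x).mul (h x hx)).congr_deriv ?_
      ring)
  intro x hx
  have hk := key x hx
  simp only [sub_self, mul_zero, Complex.exp_zero, one_mul] at hk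
  rw [← hk, ← mul_assoc, ← Complex.exp_add]
  simp

/-- Uniqueness of the Cauchy problem at `L` for `f'' = a f`, with `g` in the role of `f'`. -/
lemma cauchy_unique {L : ℝ} (hL : 0 < L) {f g : ℝ → ℂ} (a : ℂ) (hf : Continuous f)
    (hg : Continuous g) (hfd : ∀ x ∈ Set.Ioo (0:ℝ) L, HasDerivAt f (g x) x)
    (hgd : ∀ x ∈ Set.Ioo (0:ℝ) L, HasDerivAt g (a * f x) x) (hfL : f L = 0) (hgL : g L = 0) :
    ∀ x ∈ Set.Icc (0:ℝ) L, f x = 0 := by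
  obtain ⟨c, hc⟩ := IsAlgClosed.exists_pow_nat_eq a (n := 2) two_pos
  have h1 := eq_exp_of_linear_ode hL (u := fun x => g x - c * f x) (-c) (by fun_prop) (by
    intro x hx
    refine ((hgd x hx).sub ((hfd x hx).const_mul c)).congr_deriv ?_
    rw [← hc]
    ring)
  have h2 := eq_exp_of_linear_ode hL (u := f) c hf (by
    intro x hx
    refine (hfd x hx).congr_deriv ?_
    have := h1 x ⟨hx.1.le, hx.2.le⟩
    simp only [hfL, hgL, mul_zero, sub_zero] at this
    exact sub_eq_zero.mp this)
  intro x hx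
  rw [h2 x hx, hfL, mul_zero]

/-- Unique continuation for the mode-`k` adjoint Boussinesq eigen-system with the
two observations `q(L) = 0` and `ξ'(L) = 0`: for any `ν, α, L > 0` with `α ≠ ν`,
any solution of (S_k) (for `k ≠ 0`) satisfying both observation conditions
vanishes identically on `[0,L]`. -/
theorem unique_continuation_Sk_two_controls (ν α L : ℝ) (hν : 0 < ν) (hα : 0 < α)
    (hL : 0 < L) (hαν : α ≠ ν) :
    ∀ (k : ℤ), k ≠ 0 → ∀ (lam : ℝ) (ψ₁ ψ₂ ξ q : ℝ → ℂ),
      SystemSk ν α L lam k ψ₁ ψ₂ ξ q → q L = 0 → deriv ξ L = 0 →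
      ∀ x ∈ Set.Icc (0:ℝ) L, ψ₁ x = 0 ∧ ψ₂ x = 0 ∧ ξ x = 0 ∧ q x = 0 := by
  intro k hk lam ψ₁ ψ₂ ξ q hS hqL hξL
  obtain ⟨c1, c2, c3, c4, e1, e2, e3, e4, b10, b1L, b20, b2L, -, bξL⟩ := hS
  have hνC : (ν : ℂ) ≠ 0 := by exact_mod_cast hν.ne'
  have hαC : (α : ℂ) ≠ 0 := by exact_mod_cast hα.ne'
  have hkC : (k : ℂ) ≠ 0 := by exact_mod_cast hk
  have hI : Complex.I ^ 2 = -1 := Complex.I_sq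
  have hL0 : (0:ℝ) ∈ Set.Icc (0:ℝ) L := ⟨le_rfl, hL.le⟩
  have hLL : L ∈ Set.Icc (0:ℝ) L := ⟨hL.le, le_rfl⟩
  set σ : ℂ := (lam : ℂ) + (ν : ℂ) * (k : ℂ)^2 with hσ
  have i2 : ∀ f : ℝ → ℂ, iteratedDeriv 2 f = deriv (deriv f) := fun f => by
    rw [iteratedDeriv_succ, iteratedDeriv_one]
  simp only [i2] at e1 e2 e4
  have dc1 : ContDiff ℝ 3 (deriv ψ₁) := ContDiff.deriv' (by norm_num; exact c1)
  have dc2 : ContDiff ℝ 3 (deriv ψ₂) := ContDiff.deriv' (by norm_num; exact c2)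
  have ddc2 : ContDiff ℝ 2 (deriv (deriv ψ₂)) := ContDiff.deriv' (by norm_num; exact dc2)
  have dc3 : ContDiff ℝ 5 (deriv ξ) := ContDiff.deriv' (by norm_num; exact c3)
  have d1 : ∀ x, HasDerivAt ψ₁ (deriv ψ₁ x) x := fun x =>
    (c1.differentiable (by norm_num) x).hasDerivAt
  have dd1 : ∀ x, HasDerivAt (deriv ψ₁) (deriv (deriv ψ₁) x) x := fun x =>
    (dc1.differentiable (by norm_num) x).hasDerivAt
  have d2 : ∀ x, HasDerivAt ψ₂ (deriv ψ₂ x) x := fun x =>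
    (c2.differentiable (by norm_num) x).hasDerivAt
  have dd2 : ∀ x, HasDerivAt (deriv ψ₂) (deriv (deriv ψ₂) x) x := fun x =>
    (dc2.differentiable (by norm_num) x).hasDerivAt
  have ddd2 : ∀ x, HasDerivAt (deriv (deriv ψ₂)) (deriv (deriv (deriv ψ₂)) x) x := fun x =>
    (ddc2.differentiable (by norm_num) x).hasDerivAt
  have d3 : ∀ x, HasDerivAt ξ (deriv ξ x) x := fun x =>
    (c3.differentiable (by norm_num) x).hasDerivAt
  have dd3 : ∀ x, HasDerivAt (deriv ξ) (deriv (deriv ξ) x) x := fun x =>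
    (dc3.differentiable (by norm_num) x).hasDerivAt
  have dq : ∀ x, HasDerivAt q (deriv q x) x := fun x =>
    (c4.differentiable (by norm_num) x).hasDerivAt
  have k1 := c1.continuous
  have k2 := c2.continuous
  have k3 := c3.continuous
  have kq := c4.continuous
  have dk2 := dc2.continuous
  have ddk2 := ddc2.continuous
  have dk3 := dc3.continuous
  have r_eq : ∀ x ∈ Set.Ioo (0:ℝ) L, deriv ψ₂ x = -Complex.I * k * ψ₁ x := fun x hx => by
    linear_combination e3 x hx
  have r_eq' : ∀ x ∈ Set.Icc (0:ℝ) L, deriv ψ₂ x = -Complex.I * k * ψ₁ x :=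
    eqOn_Icc_of_eqOn_Ioo hL dk2 (by fun_prop) r_eq
  have s_eq : ∀ x ∈ Set.Ioo (0:ℝ) L, deriv (deriv ψ₂) x = -Complex.I * k * deriv ψ₁ x := by
    intro x hx
    have hev : deriv ψ₂ =ᶠ[nhds x] fun y => -Complex.I * k * ψ₁ y :=
      Filter.eventually_of_mem (isOpen_Ioo.mem_nhds hx) r_eq
    exact (((d1 x).const_mul (-Complex.I * k)).congr_of_eventuallyEq hev).deriv
  have t_eq : ∀ x ∈ Set.Ioo (0:ℝ) L,
      deriv (deriv (deriv ψ₂)) x = -Complex.I * k * deriv (deriv ψ₁) x := by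
    intro x hx
    have hev : deriv (deriv ψ₂) =ᶠ[nhds x] fun y => -Complex.I * k * deriv ψ₁ y :=
      Filter.eventually_of_mem (isOpen_Ioo.mem_nhds hx) s_eq
    exact (((dd1 x).const_mul (-Complex.I * k)).congr_of_eventuallyEq hev).deriv
  have t_eq' : ∀ x ∈ Set.Ioo (0:ℝ) L,
      ν * deriv (deriv (deriv ψ₂)) x = k ^ 2 * q x + σ * deriv ψ₂ x := by
    intro x hx
    linear_combination ν * t_eq x hx + Complex.I * k * e1 x hx - σ * r_eq x hx
      - k ^ 2 * q x * hI
  -- Incompressibility extends to the closed interval by continuity, hence `ψ₂'` vanishes at both ends.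
  have r0 : deriv ψ₂ 0 = 0 := by rw [r_eq' 0 hL0, b10, mul_zero]
  have rL : deriv ψ₂ L = 0 := by rw [r_eq' L hLL, b1L, mul_zero]
  obtain ⟨w, hw⟩ : ∃ w : ℝ → ℂ, w = fun x => ν * deriv (deriv ψ₂) x - σ * ψ₂ x := ⟨_, rfl⟩
  have kw : Continuous w := by rw [hw]; fun_prop
  have w0 : w 0 = ν * deriv (deriv ψ₂) 0 := by simp [hw, b20]
  have wL : w L = ν * deriv (deriv ψ₂) L := by simp [hw, b2L]
  have dw : ∀ x ∈ Set.Ioo (0:ℝ) L, HasDerivAt w (k ^ 2 * q x) x := by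
    intro x hx
    rw [hw]
    refine (((ddd2 x).const_mul (ν : ℂ)).sub ((d2 x).const_mul σ)).congr_deriv ?_
    linear_combination t_eq' x hx
  have dqw : ∀ x ∈ Set.Ioo (0:ℝ) L, HasDerivAt q (w x) x := by
    intro x hx
    refine (dq x).congr_deriv ?_
    rw [hw]
    linear_combination e2 x hx
  -- `w ± k q` diagonalize the system `q' = w`, `w' = k² q`.
  have hp := eq_exp_of_linear_ode hL (u := fun x => w x + k * q x) k (by fun_prop) (by
    intro x hx
    refine ((dw x hx).add ((dqw x hx).const_mul (k : ℂ))).congr_deriv ?_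
    ring)
  have hm := eq_exp_of_linear_ode hL (u := fun x => w x - k * q x) (-k) (by fun_prop) (by
    intro x hx
    refine ((dw x hx).sub ((dqw x hx).const_mul (k : ℂ))).congr_deriv ?_
    ring)
  simp only [hqL, mul_zero, add_zero, sub_zero] at hp hm
  -- The first integral of the fourth-order equation; no complex conjugates are involved.
  have energy := eq_endpoint_of_deriv_zero hL
    (f := fun x => deriv ψ₂ x * (k ^ 2 * q x + σ * deriv ψ₂ x)
      - ν / 2 * (deriv (deriv ψ₂) x * deriv (deriv ψ₂) x)
      - (σ + ν * k ^ 2) / 2 * (deriv ψ₂ x * deriv ψ₂ x)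
      + σ * k ^ 2 / 2 * (ψ₂ x * ψ₂ x)) (by fun_prop) (by
    intro x hx
    refine ((((dd2 x).mul (((dqw x hx).const_mul ((k : ℂ) ^ 2)).add ((dd2 x).const_mul σ))).sub
      (((ddd2 x).mul (ddd2 x)).const_mul ((ν : ℂ) / 2))).sub
      (((dd2 x).mul (dd2 x)).const_mul ((σ + ν * k ^ 2) / 2))).add
      (((d2 x).mul (d2 x)).const_mul (σ * k ^ 2 / 2)) |>.congr_deriv ?_
    simp only [hw, Pi.add_apply]
    linear_combination -deriv (deriv ψ₂) x * t_eq' x hx)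
  have hen := energy 0 hL0
  simp only [r0, rL, b20, b2L] at hen
  have hsq : w 0 ^ 2 = w L ^ 2 := by
    rw [w0, wL]
    linear_combination -2 * ν * hen
  have hcosh : w 0 = Real.cosh (k * L) * w L := by
    have hp0 := hp 0 hL0
    have hm0 := hm 0 hL0
    rw [Complex.ofReal_cosh, Complex.cosh]
    push_cast at hp0 hm0 ⊢
    rw [show (k:ℂ) * (0 - L) = -(k * L) by ring] at hp0
    rw [show -(k:ℂ) * (0 - L) = k * L by ring] at hm0
    linear_combination (hp0 + hm0) / 2
  have hwL : w L = 0 := by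
    have hone : 1 < Real.cosh (k * L) := Real.one_lt_cosh.mpr
      (mul_ne_zero (by exact_mod_cast hk) hL.ne')
    have hne : ((Real.cosh (k * L) : ℂ)) ^ 2 - 1 ≠ 0 := by
      have : (Real.cosh (k * L)) ^ 2 - 1 ≠ 0 := by nlinarith
      exact_mod_cast this
    have hz : ((Real.cosh (k * L) : ℂ) ^ 2 - 1) * w L ^ 2 = 0 := by
      rw [hcosh] at hsq
      linear_combination hsq
    exact pow_eq_zero_iff two_ne_zero |>.mp ((mul_eq_zero.mp hz).resolve_left hne)
  simp only [hwL, mul_zero] at hp hm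
  have hq0 : ∀ x ∈ Set.Icc (0:ℝ) L, q x = 0 := by
    intro x hx
    have : (k : ℂ) * q x = 0 := by linear_combination (hp x hx - hm x hx) / 2
    exact (mul_eq_zero.mp this).resolve_left hkC
  have hw0 : ∀ x ∈ Set.Icc (0:ℝ) L, w x = 0 := by
    intro x hx
    linear_combination (hp x hx + hm x hx) / 2
  have hψ₂ : ∀ x ∈ Set.Icc (0:ℝ) L, ψ₂ x = 0 :=
    cauchy_unique hL (σ / ν) k2 dk2 (fun x _ => d2 x) (by
      intro x hx
      refine (dd2 x).congr_deriv ?_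
      have h := hw0 x ⟨hx.1.le, hx.2.le⟩
      simp only [hw] at h
      field_simp
      linear_combination h) b2L rL
  have hψ₁ : ∀ x ∈ Set.Icc (0:ℝ) L, ψ₁ x = 0 := by
    refine eqOn_Icc_of_eqOn_Ioo hL k1 continuous_const ?_
    intro x hx
    have hev : ψ₂ =ᶠ[nhds x] fun _ => (0:ℂ) :=
      Filter.eventually_of_mem (isOpen_Ioo.mem_nhds hx)
        fun y hy => hψ₂ y ⟨hy.1.le, hy.2.le⟩
    have h0 : deriv ψ₂ x = 0 := by rw [hev.deriv_eq, deriv_const]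
    have h := e3 x hx
    rw [h0, add_zero] at h
    exact (mul_eq_zero.mp h).resolve_left (mul_ne_zero Complex.I_ne_zero hkC)
  have hξ : ∀ x ∈ Set.Icc (0:ℝ) L, ξ x = 0 :=
    cauchy_unique hL (((lam : ℂ) + α * k ^ 2) / α) k3 dk3 (fun x _ => d3 x) (by
      intro x hx
      refine (dd3 x).congr_deriv ?_
      have h := e4 x hx
      rw [hψ₂ x ⟨hx.1.le, hx.2.le⟩] at h
      field_simp
      linear_combination -h) bξL hξL
  intro x hx
  exact ⟨hψ₁ x hx, hψ₂ x hx, hξ x hx, hq0 x hx⟩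
end

section
/- Stokes eigenvalues at mode k lie below −νk² (energy argument): Let ν, L > 0, k ∈ ℤ, and λ ∈ ℝ with λ + νk² ≥ 0. If ψ : [0,L] → ℝ is of class C⁴ and satisfies ν ψ⁽⁴⁾(x) − (λ + 2νk²) ψ''(x) + k²(λ + νk²) ψ(x) = 0 for all x ∈ (0,L), together with the boundary conditions ψ(0) = ψ(L) = ψ'(0) = ψ'(L) = 0, then ψ = 0 identically on [0,L]. -/
/-!
The energy argument, in pointwise form. With `μ = lam + ν k² ≥ 0`, the boundary terms produced by
multiplying the equation by `ψ` and integrating by parts are collected in the flux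
`G = ν (ψ''' ψ - ψ'' ψ') - (μ + ν k²) ψ' ψ`. The equation gives
`G' = -(ν ψ''² + (μ + ν k²) ψ'² + k² μ ψ²) ≤ 0` on `(0,L)`, while the boundary conditions give
`G 0 = G L = 0`. Hence `G` is antitone with equal end values, so it is constant, `G' = 0`, and
`ψ'' = 0` on `(0,L)`. Together with `ψ 0 = ψ' 0 = 0` this forces `ψ = 0`.
-/

/-- Differentiability is required only in the interior; continuity carries the conclusion to the
endpoints. -/
lemma eq_zero_of_hasDerivAt_zero {f : ℝ → ℝ} {L : ℝ} (hf : Continuous f)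
    (hd : ∀ x ∈ Set.Ioo (0:ℝ) L, HasDerivAt f 0 x) (h0 : f 0 = 0) :
    ∀ x ∈ Set.Icc (0:ℝ) L, f x = 0 := by
  have hdiff : DifferentiableOn ℝ f (interior (Set.Icc 0 L)) := by
    rw [interior_Icc]
    exact fun x hx => (hd x hx).differentiableAt.differentiableWithinAt
  have hanti : AntitoneOn f (Set.Icc 0 L) :=
    antitoneOn_of_deriv_nonpos (convex_Icc 0 L) hf.continuousOn hdiff fun x hx => by
      rw [interior_Icc] at hx
      exact (hd x hx).deriv.le
  have hmono : MonotoneOn f (Set.Icc 0 L) :=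
    monotoneOn_of_deriv_nonneg (convex_Icc 0 L) hf.continuousOn hdiff fun x hx => by
      rw [interior_Icc] at hx
      exact (hd x hx).deriv.ge
  intro x hx
  have h0L : (0:ℝ) ∈ Set.Icc 0 L := ⟨le_rfl, hx.1.trans hx.2⟩
  exact le_antisymm ((hanti h0L hx hx.1).trans h0.le) (h0.ge.trans (hmono h0L hx hx.1))

/-- A function with nonpositive derivative that vanishes at both ends of `[0,L]` is constant, so its
derivative vanishes in the interior. -/
lemma deriv_eq_zero_of_nonpos_of_ends {G G' : ℝ → ℝ} {L : ℝ}
    (hd : ∀ x, HasDerivAt G (G' x) x) (hle : ∀ x ∈ Set.Ioo (0:ℝ) L, G' x ≤ 0)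
    (h0 : G 0 = 0) (hGL : G L = 0) :
    ∀ x ∈ Set.Ioo (0:ℝ) L, G' x = 0 := by
  have hdiff : Differentiable ℝ G := fun x => (hd x).differentiableAt
  have hanti : AntitoneOn G (Set.Icc 0 L) :=
    antitoneOn_of_deriv_nonpos (convex_Icc 0 L) hdiff.continuous.continuousOn
      hdiff.differentiableOn fun x hx => by
        rw [interior_Icc] at hx
        exact (hd x).deriv.trans_le (hle x hx)
  intro x hx
  have hev : G =ᶠ[nhds x] fun _ => (0:ℝ) := by
    filter_upwards [isOpen_Ioo.mem_nhds hx] with y hy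
    have hL : (0:ℝ) ≤ L := (hy.1.trans hy.2).le
    have hyI := Set.Ioo_subset_Icc_self hy
    exact le_antisymm ((hanti ⟨le_rfl, hL⟩ hyI hy.1.le).trans h0.le)
      (hGL.ge.trans (hanti hyI ⟨hL, le_rfl⟩ hy.2.le))
  exact (hd x).unique ((hasDerivAt_const x (0:ℝ)).congr_of_eventuallyEq hev)

/-- Stokes eigenvalues at mode `k` lie below `−νk²`: if `λ + νk² ≥ 0`, the only
`C⁴` solution of the fourth-order ODE
`ν ψ⁽⁴⁾ − (λ + 2νk²) ψ'' + k²(λ + νk²) ψ = 0` on `(0,L)` with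
`ψ(0) = ψ(L) = ψ'(0) = ψ'(L) = 0` is `ψ ≡ 0` on `[0,L]`. -/
theorem stokes_eigenvalue_below (ν L : ℝ) (hν : 0 < ν) (hL : 0 < L) (k : ℤ)
    (lam : ℝ) (hlam : 0 ≤ lam + ν * (k : ℝ)^2) (ψ : ℝ → ℝ) (hψ : ContDiff ℝ 4 ψ)
    (hode : ∀ x ∈ Set.Ioo (0:ℝ) L,
      ν * iteratedDeriv 4 ψ x - (lam + 2 * ν * (k : ℝ)^2) * iteratedDeriv 2 ψ x
        + (k : ℝ)^2 * (lam + ν * (k : ℝ)^2) * ψ x = 0)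
    (hbc0 : ψ 0 = 0) (hbcL : ψ L = 0) (hbc0' : deriv ψ 0 = 0) (hbcL' : deriv ψ L = 0) :
    ∀ x ∈ Set.Icc (0:ℝ) L, ψ x = 0 := by
  have hstep : ∀ m : ℕ, m < 4 → ∀ x,
      HasDerivAt (iteratedDeriv m ψ) (iteratedDeriv (m + 1) ψ x) x := by
    intro m hm x
    rw [iteratedDeriv_succ]
    exact (hψ.differentiable_iteratedDeriv m (by exact_mod_cast hm) x).hasDerivAt
  have h0 : ∀ x, HasDerivAt ψ (deriv ψ x) x := by
    simpa [iteratedDeriv_one] using hstep 0 (by norm_num)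
  have h1 : ∀ x, HasDerivAt (deriv ψ) (iteratedDeriv 2 ψ x) x := by
    simpa [iteratedDeriv_one] using hstep 1 (by norm_num)
  have h2 := hstep 2 (by norm_num)
  have h3 := hstep 3 (by norm_num)
  have hG := fun x => ((((h3 x).mul (h0 x)).sub ((h2 x).mul (h1 x))).const_mul ν).sub
    (((h1 x).mul (h0 x)).const_mul (lam + 2 * ν * (k : ℝ)^2))
  have hk : 0 ≤ ν * (k : ℝ)^2 := by positivity
  have hkμ : 0 ≤ (k : ℝ)^2 * (lam + ν * (k : ℝ)^2) := by positivity
  have hc : 0 ≤ lam + 2 * ν * (k : ℝ)^2 := by linarith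
  have henergy : ∀ x ∈ Set.Ioo (0:ℝ) L,
      ν * (iteratedDeriv 4 ψ x * ψ x + iteratedDeriv 3 ψ x * deriv ψ x
        - (iteratedDeriv 3 ψ x * deriv ψ x + iteratedDeriv 2 ψ x * iteratedDeriv 2 ψ x))
        - (lam + 2 * ν * (k : ℝ)^2) * (iteratedDeriv 2 ψ x * ψ x + deriv ψ x * deriv ψ x)
      = -(ν * iteratedDeriv 2 ψ x ^ 2 + (lam + 2 * ν * (k : ℝ)^2) * deriv ψ x ^ 2
        + (k : ℝ)^2 * (lam + ν * (k : ℝ)^2) * ψ x ^ 2) := by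
    intro x hx
    linear_combination ψ x * hode x hx
  have hzero := deriv_eq_zero_of_nonpos_of_ends (L := L) hG
    (fun x hx => by
      refine (henergy x hx).trans_le (neg_nonpos.mpr ?_)
      positivity)
    (by simp [hbc0, hbc0']) (by simp [hbcL, hbcL'])
  have hψ2 : ∀ x ∈ Set.Ioo (0:ℝ) L, iteratedDeriv 2 ψ x = 0 := by
    intro x hx
    have hsum := (henergy x hx).symm.trans (hzero x hx)
    have ha : 0 ≤ (lam + 2 * ν * (k : ℝ)^2) * deriv ψ x ^ 2 := by positivity
    have hb : 0 ≤ (k : ℝ)^2 * (lam + ν * (k : ℝ)^2) * ψ x ^ 2 := by positivity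
    have hc2 : 0 ≤ ν * iteratedDeriv 2 ψ x ^ 2 := by positivity
    have hs : ν * iteratedDeriv 2 ψ x ^ 2 = 0 := by linarith
    simpa [hν.ne'] using hs
  have hψ1 := eq_zero_of_hasDerivAt_zero (L := L)
    (continuous_iff_continuousAt.mpr fun x => (h1 x).continuousAt)
    (fun x hx => hψ2 x hx ▸ h1 x) hbc0'
  exact eq_zero_of_hasDerivAt_zero hψ.continuous
    (fun x hx => hψ1 x (Set.Ioo_subset_Icc_self hx) ▸ h0 x) hbc0
end

section
/- Reduction of the mode-k coupled eigen-system to a sixth-order ODE for the temperature component ξ: Let ν, α, L > 0, k ∈ ℤ \ {0}, λ ∈ ℂ with λ + αk² ≠ 0 allowed arbitrary, and suppose ψ₂ : [0,L] → ℂ is of class C⁴ and satisfies ν ψ₂⁽⁴⁾ − (λ + 2νk²) ψ₂'' + k²(λ + νk²) ψ₂ = 0 on (0,L) with ψ₂(0) = ψ₂(L) = ψ₂'(0) = ψ₂'(L) = 0, and ξ : [0,L] → ℂ is of class C⁶ and satisfies (λ + αk²)ξ − αξ'' = ψ₂ on (0,L) with ξ(0) = ξ(L) = 0. Then ξ satisfies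 the sixth-order equation (E6) on (0,L) together with the boundary conditions (BC6). -/
/-!
Put `a = λ + αk²`, so that `ψ₂ = a ξ - α ξ''` on `(0,L)`. Differentiating this identity `n ≤ 4` times
gives `ψ₂⁽ⁿ⁾ = a ξ⁽ⁿ⁾ - α ξ⁽ⁿ⁺²⁾` on `(0,L)`, and since both sides are continuous the identity extends
to `[0,L]` (`iteratedDeriv_psi_eq`). Substituting the cases `n = 0, 2, 4` into the fourth-order
equation for `ψ₂` and dividing by `να` yields (E6); the cases `n = 0, 1` at the endpoints, together
with the boundary conditions on `ψ₂` and `ξ`, yield (BC6).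
-/

/-- The sixth-order ODE (E6) on `(0,L)` for the temperature component `ξ`,
with (possibly complex) spectral parameter `lam`:
`−ξ⁽⁶⁾ + (λ/α + λ/ν + 3k²) ξ⁽⁴⁾ − ((λ/ν + 2k²)(λ/α + k²) + k²(λ/ν + k²)) ξ''`
`+ k²(λ/ν + k²)(λ/α + k²) ξ = 0`. -/
def E6 (ν α L : ℝ) (k : ℤ) (lam : ℂ) (ξ : ℝ → ℂ) : Prop :=
  ∀ x ∈ Set.Ioo (0:ℝ) L,
    -iteratedDeriv 6 ξ x
      + (lam / (α : ℂ) + lam / (ν : ℂ) + 3 * (k : ℂ)^2) * iteratedDeriv 4 ξ x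
      - ((lam / (ν : ℂ) + 2 * (k : ℂ)^2) * (lam / (α : ℂ) + (k : ℂ)^2)
          + (k : ℂ)^2 * (lam / (ν : ℂ) + (k : ℂ)^2)) * iteratedDeriv 2 ξ x
      + (k : ℂ)^2 * (lam / (ν : ℂ) + (k : ℂ)^2) * (lam / (α : ℂ) + (k : ℂ)^2) * ξ x = 0

/-- The boundary conditions (BC6) for the sixth-order problem:
`ξ(0) = ξ(L) = ξ''(0) = ξ''(L) = 0`, `ξ'''(0) − (λ/α + k²)ξ'(0) = 0`,
`ξ'''(L) − (λ/α + k²)ξ'(L) = 0`. -/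
def BC6 (α L : ℝ) (k : ℤ) (lam : ℂ) (ξ : ℝ → ℂ) : Prop :=
  ξ 0 = 0 ∧ ξ L = 0 ∧ iteratedDeriv 2 ξ 0 = 0 ∧ iteratedDeriv 2 ξ L = 0 ∧
  iteratedDeriv 3 ξ 0 - (lam / (α : ℂ) + (k : ℂ)^2) * deriv ξ 0 = 0 ∧
  iteratedDeriv 3 ξ L - (lam / (α : ℂ) + (k : ℂ)^2) * deriv ξ L = 0

lemma iteratedDeriv_sub_second {ξ : ℝ → ℂ} (hξ : ContDiff ℝ 6 ξ) (a b : ℂ) {n : ℕ} (hn : n ≤ 4)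
    (x : ℝ) :
    iteratedDeriv n (fun y => a * ξ y - b * iteratedDeriv 2 ξ y) x
      = a * iteratedDeriv n ξ x - b * iteratedDeriv (n + 2) ξ x := by
  have h2 : ContDiff ℝ 4 (iteratedDeriv 2 ξ) := by
    rw [iteratedDeriv_eq_iterate]
    exact ContDiff.iterate_deriv' 4 2 (by exact_mod_cast hξ)
  have hn' : (n : WithTop ℕ∞) ≤ 4 := by exact_mod_cast hn
  have hn6 : (n : WithTop ℕ∞) ≤ 6 := by exact_mod_cast (by omega : n ≤ 6)
  have hcomp : iteratedDeriv n (iteratedDeriv 2 ξ) = iteratedDeriv (n + 2) ξ := by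
    simp only [iteratedDeriv_eq_iterate, Function.iterate_add_apply]
  rw [iteratedDeriv_fun_sub (contDiff_const.mul (hξ.of_le hn6)).contDiffAt
    (contDiff_const.mul (h2.of_le hn')).contDiffAt,
    iteratedDeriv_const_mul_field, iteratedDeriv_const_mul_field, hcomp]

/-- The relation `ψ = a ξ - b ξ''` on `(0,L)` may be differentiated up to four times, and the
resulting identities persist at the endpoints by continuity. -/
lemma iteratedDeriv_psi_eq {L : ℝ} (hL : 0 < L) {ψ ξ : ℝ → ℂ} (hψ : ContDiff ℝ 4 ψ)
    (hξ : ContDiff ℝ 6 ξ) {a b : ℂ}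
    (h : ∀ x ∈ Set.Ioo (0:ℝ) L, a * ξ x - b * iteratedDeriv 2 ξ x = ψ x)
    {n : ℕ} (hn : n ≤ 4) {x : ℝ} (hx : x ∈ Set.Icc (0:ℝ) L) :
    iteratedDeriv n ψ x = a * iteratedDeriv n ξ x - b * iteratedDeriv (n + 2) ξ x := by
  have hopen : Set.EqOn (iteratedDeriv n ψ)
      (fun x => a * iteratedDeriv n ξ x - b * iteratedDeriv (n + 2) ξ x) (Set.Ioo 0 L) := by
    intro y hy
    have hev : ψ =ᶠ[nhds y] fun y => a * ξ y - b * iteratedDeriv 2 ξ y := by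
      filter_upwards [isOpen_Ioo.mem_nhds hy] with z hz
      exact (h z hz).symm
    rw [hev.iteratedDeriv_eq n]
    exact iteratedDeriv_sub_second hξ a b hn y
  have hc0 : Continuous (iteratedDeriv n ψ) :=
    hψ.continuous_iteratedDeriv n (by exact_mod_cast hn)
  have hc1 : Continuous (iteratedDeriv n ξ) :=
    hξ.continuous_iteratedDeriv n (by exact_mod_cast (by omega : n ≤ 6))
  have hc2 : Continuous (iteratedDeriv (n + 2) ξ) :=
    hξ.continuous_iteratedDeriv (n + 2) (by exact_mod_cast (by omega : n + 2 ≤ 6))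
  refine hopen.closure hc0 (by fun_prop) ?_
  rwa [closure_Ioo hL.ne]

/-- Reduction of the mode-`k` coupled eigen-system to the sixth-order ODE (E6)
with boundary conditions (BC6) for the temperature component `ξ`. -/
theorem reduction_sixth_order (ν α L : ℝ) (hν : 0 < ν) (hα : 0 < α) (hL : 0 < L)
    (k : ℤ) (hk : k ≠ 0) (lam : ℂ) (ψ₂ ξ : ℝ → ℂ)
    (hψ₂ : ContDiff ℝ 4 ψ₂) (hξ : ContDiff ℝ 6 ξ)
    (hodeψ : ∀ x ∈ Set.Ioo (0:ℝ) L,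
      (ν : ℂ) * iteratedDeriv 4 ψ₂ x - (lam + 2 * (ν : ℂ) * (k : ℂ)^2) * iteratedDeriv 2 ψ₂ x
        + (k : ℂ)^2 * (lam + (ν : ℂ) * (k : ℂ)^2) * ψ₂ x = 0)
    (hbcψ : ψ₂ 0 = 0 ∧ ψ₂ L = 0 ∧ deriv ψ₂ 0 = 0 ∧ deriv ψ₂ L = 0)
    (hodeξ : ∀ x ∈ Set.Ioo (0:ℝ) L,
      (lam + (α : ℂ) * (k : ℂ)^2) * ξ x - (α : ℂ) * iteratedDeriv 2 ξ x = ψ₂ x)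
    (hbcξ : ξ 0 = 0 ∧ ξ L = 0) :
    E6 ν α L k lam ξ ∧ BC6 α L k lam ξ := by
  have hνc : (ν : ℂ) ≠ 0 := by exact_mod_cast hν.ne'
  have hαc : (α : ℂ) ≠ 0 := by exact_mod_cast hα.ne'
  have key {n : ℕ} (hn : n ≤ 4) {x : ℝ} (hx : x ∈ Set.Icc (0:ℝ) L) :=
    iteratedDeriv_psi_eq hL hψ₂ hξ hodeξ hn hx
  obtain ⟨hψ0, hψL, hdψ0, hdψL⟩ := hbcψ
  obtain ⟨hξ0, hξL⟩ := hbcξ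
  have second {x : ℝ} (hx : x ∈ Set.Icc (0:ℝ) L) (hψx : ψ₂ x = 0) (hξx : ξ x = 0) :
      iteratedDeriv 2 ξ x = 0 := by
    have h := key (n := 0) (by norm_num) hx
    simp only [iteratedDeriv_zero, hψx, hξx, zero_add, mul_zero, zero_sub] at h
    simpa [hαc] using h.symm
  have third {x : ℝ} (hx : x ∈ Set.Icc (0:ℝ) L) (hdψx : deriv ψ₂ x = 0) :
      iteratedDeriv 3 ξ x - (lam / (α : ℂ) + (k : ℂ)^2) * deriv ξ x = 0 := by
    have h := key (n := 1) (by norm_num) hx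
    simp only [iteratedDeriv_one, hdψx, Nat.reduceAdd] at h
    field_simp
    linear_combination h
  have h0 : (0:ℝ) ∈ Set.Icc (0:ℝ) L := Set.left_mem_Icc.2 hL.le
  have hLm : L ∈ Set.Icc (0:ℝ) L := Set.right_mem_Icc.2 hL.le
  refine ⟨fun x hx => ?_, hξ0, hξL, second h0 hψ0 hξ0, second hLm hψL hξL,
    third h0 hdψ0, third hLm hdψL⟩
  have e := hodeψ x hx
  rw [key (n := 4) le_rfl (Set.Ioo_subset_Icc_self hx),
    key (n := 2) (by norm_num) (Set.Ioo_subset_Icc_self hx), ← hodeξ x hx] at e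
  simp only [Nat.reduceAdd] at e
  field_simp
  linear_combination e
end

section
/- Determinant of the 6×6 boundary matrix M(μ): For all L > 0 and all complex numbers k, μ₁, μ₂, let M be the 6×6 complex matrix with rows: (1, 1, 1, 1, 1, 1); (e^{kL}, e^{−kL}, e^{μ₁L}, e^{−μ₁L}, e^{μ₂L}, e^{−μ₂L}); (k², k², μ₁², μ₁², μ₂², μ₂²); (k²e^{kL}, k²e^{−kL}, μ₁²e^{μ₁L}, μ₁²e^{−μ₁L}, μ₂²e^{μ₂L}, μ₂²e^{−μ₂L}); (k³ − kμ₂², kμ₂² − k³, μ₁³ − μ₁μ₂², μ₁μ₂² − μ₁³, 0, 0); (e^{kL}(k³ − kμ₂²), e^{−kL}(kμ₂² − k³), e^{μ₁L}(μ₁³ − μ₁μ₂²), e^{−μ₁L}(μ₁μ₂² − μ₁³), 0, 0). Then det(M) = f₊ · f₋ · (μ₂ − k)²(μ₂ + k)²(μ₂ − μ₁)²(μ₂ + μ₁)² (e^{μ₂L} − 1)(e^{μ₂L} + 1) e^{−Lμ₂ − Lμ₁ − kL}, where f₊ = μ₁e^{μ₁L + kL} − ke^{μ₁L + kL} − μ₁e^{μ₁L}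 − ke^{μ₁L} + μ₁e^{kL} − μ₁ + ke^{kL} + k and f₋ = μ₁e^{μ₁L + kL} − ke^{μ₁L + kL} + μ₁e^{μ₁L} + ke^{μ₁L} − μ₁e^{kL} − μ₁ − ke^{kL} + k. -/
/-!
Subtracting `μ₂²` times the first two rows from the next two makes the last two columns vanish
below the first two rows, so the determinant is the product of a `2 × 2` and a `4 × 4` one
(`det_six`). The `4 × 4` block has columns divisible by `p = k² - μ₂²` (twice) and
`q = μ₁² - μ₂²` (twice); pulling these factors out leaves the determinant computed in `det_four`.
With `a, b, c` the three exponentials `e^{kL}, e^{μ₁L}, e^{μ₂L}` and `a', b', c'` their inverses,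
the claim becomes a polynomial identity.
-/

open Complex

/-- The `4 × 4` block after the column factors `k² - μ₂²` and `μ₁² - μ₂²` are removed. -/
lemma det_four (k m a a' b b' : ℂ) (ha : a * a' = 1) (hb : b * b' = 1) :
    Matrix.det !![1, 1, 1, 1; a, a', b, b'; k, -k, m, -m; a * k, -(a' * k), b * m, -(b' * m)]
    = -((m * (b * a) - k * (b * a) - m * b - k * b + m * a - m + k * a + k)
      * (m * (b * a) - k * (b * a) + m * b + k * b - m * a - m - k * a + k) * (a' * b')) := by
  have ha0 : a ≠ 0 := left_ne_zero_of_mul_eq_one ha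
  have hb0 : b ≠ 0 := left_ne_zero_of_mul_eq_one hb
  obtain rfl : a' = a⁻¹ := eq_inv_of_mul_eq_one_right ha
  obtain rfl : b' = b⁻¹ := eq_inv_of_mul_eq_one_right hb
  simp [Matrix.det_succ_row_zero, Fin.sum_univ_succ, Fin.succAbove]
  field_simp
  ring

/-- Row reduction of the boundary matrix: the columns of `μ₂` split off as a `2 × 2` block. -/
lemma det_six (k m n a a' b b' c c' : ℂ) :
    Matrix.det
      !![1, 1, 1, 1, 1, 1;
         a, a', b, b', c, c';
         k^2, k^2, m^2, m^2, n^2, n^2;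
         k^2 * a, k^2 * a', m^2 * b, m^2 * b', n^2 * c, n^2 * c';
         k^3 - k * n^2, k * n^2 - k^3, m^3 - m * n^2, m * n^2 - m^3, 0, 0;
         a * (k^3 - k * n^2), a' * (k * n^2 - k^3),
           b * (m^3 - m * n^2), b' * (m * n^2 - m^3), 0, 0]
    = (c' - c) * ((k^2 - n^2)^2 * (m^2 - n^2)^2 *
      Matrix.det
        !![1, 1, 1, 1; a, a', b, b'; k, -k, m, -m; a * k, -(a' * k), b * m, -(b' * m)]) := by
  set R : Matrix (Fin 4) (Fin 4) ℂ :=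
    !![1, 1, 1, 1; a, a', b, b'; k, -k, m, -m; a * k, -(a' * k), b * m, -(b' * m)] with hR
  -- `P` undoes the row reduction and moves the first two rows from the bottom back to the top.
  let P : Matrix (Fin 6) (Fin 6) ℂ :=
    !![0, 0, 0, 0, 1, 0;
       0, 0, 0, 0, 0, 1;
       1, 0, 0, 0, n^2, 0;
       0, 1, 0, 0, 0, n^2;
       0, 0, 1, 0, 0, 0;
       0, 0, 0, 1, 0, 0]
  let D : Matrix (Fin 4) (Fin 4) ℂ :=
    Matrix.diagonal ![k^2 - n^2, k^2 - n^2, m^2 - n^2, m^2 - n^2]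
  let S : Matrix (Fin 2) (Fin 4) ℂ := !![1, 1, 1, 1; a, a', b, b']
  let C : Matrix (Fin 2) (Fin 2) ℂ := !![1, 1; c, c']
  let T : Matrix (Fin 4) (Fin 4) ℂ :=
    !![k^2 - n^2, k^2 - n^2, m^2 - n^2, m^2 - n^2;
       a * (k^2 - n^2), a' * (k^2 - n^2), b * (m^2 - n^2), b' * (m^2 - n^2);
       k * (k^2 - n^2), -k * (k^2 - n^2), m * (m^2 - n^2), -m * (m^2 - n^2);
       a * k * (k^2 - n^2), -(a' * k) * (k^2 - n^2),
         b * m * (m^2 - n^2), -(b' * m) * (m^2 - n^2)]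
  have hT : T = R * D := by
    ext i j
    rw [Matrix.mul_diagonal]
    fin_cases i <;> fin_cases j <;> simp [T, R]
  let N : Matrix (Fin 6) (Fin 6) ℂ :=
    Matrix.reindex finSumFinEquiv finSumFinEquiv (Matrix.fromBlocks T 0 S C)
  have hP : P.det = 1 := by
    simp [P, Matrix.det_succ_row_zero, Fin.sum_univ_succ, Fin.succAbove]
    norm_num
  have hD : D.det = (k^2 - n^2)^2 * (m^2 - n^2)^2 := by
    simp only [D, Matrix.det_diagonal, Fin.prod_univ_four]
    simp
    ring
  have hN : N.det = R.det * D.det * (c' - c) := by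
    simp [N, C, hT, Matrix.det_fromBlocks_zero₁₂, Matrix.det_mul, Matrix.det_fin_two]
  have hNe : N =
      !![k^2 - n^2, k^2 - n^2, m^2 - n^2, m^2 - n^2, 0, 0;
         a * (k^2 - n^2), a' * (k^2 - n^2), b * (m^2 - n^2), b' * (m^2 - n^2), 0, 0;
         k * (k^2 - n^2), -k * (k^2 - n^2), m * (m^2 - n^2), -m * (m^2 - n^2), 0, 0;
         a * k * (k^2 - n^2), -(a' * k) * (k^2 - n^2),
           b * m * (m^2 - n^2), -(b' * m) * (m^2 - n^2), 0, 0;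
         1, 1, 1, 1, 1, 1;
         a, a', b, b', c, c'] := by
    ext i j
    fin_cases i <;> fin_cases j <;> rfl
  rw [show (c' - c) * ((k^2 - n^2)^2 * (m^2 - n^2)^2 * R.det) = (P * N).det by
    rw [Matrix.det_mul, hP, hN, hD]; ring]
  congr 1
  rw [hNe]
  ext i j
  fin_cases i <;> fin_cases j <;> simp [P, Matrix.mul_apply, Fin.sum_univ_six] <;> ring

/-- Determinant of the 6×6 boundary matrix `M(μ)` encoding the boundary
conditions (BC6) on the fundamental basis `(e^{kx}, e^{−kx}, e^{μ₁x}, e^{−μ₁x},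
e^{μ₂x}, e^{−μ₂x})` of the sixth-order ODE (E6). -/
theorem det_boundary_matrix (L : ℝ) (hL : 0 < L) (k μ₁ μ₂ : ℂ) :
    Matrix.det
      !![1, 1, 1, 1, 1, 1;
         exp (k * L), exp (-k * L), exp (μ₁ * L), exp (-μ₁ * L), exp (μ₂ * L), exp (-μ₂ * L);
         k^2, k^2, μ₁^2, μ₁^2, μ₂^2, μ₂^2;
         k^2 * exp (k * L), k^2 * exp (-k * L), μ₁^2 * exp (μ₁ * L), μ₁^2 * exp (-μ₁ * L),
           μ₂^2 * exp (μ₂ * L), μ₂^2 * exp (-μ₂ * L);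
         k^3 - k * μ₂^2, k * μ₂^2 - k^3, μ₁^3 - μ₁ * μ₂^2, μ₁ * μ₂^2 - μ₁^3, 0, 0;
         exp (k * L) * (k^3 - k * μ₂^2), exp (-k * L) * (k * μ₂^2 - k^3),
           exp (μ₁ * L) * (μ₁^3 - μ₁ * μ₂^2), exp (-μ₁ * L) * (μ₁ * μ₂^2 - μ₁^3), 0, 0]
    = (μ₁ * exp (μ₁ * L + k * L) - k * exp (μ₁ * L + k * L) - μ₁ * exp (μ₁ * L)
        - k * exp (μ₁ * L) + μ₁ * exp (k * L) - μ₁ + k * exp (k * L) + k)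
      * (μ₁ * exp (μ₁ * L + k * L) - k * exp (μ₁ * L + k * L) + μ₁ * exp (μ₁ * L)
        + k * exp (μ₁ * L) - μ₁ * exp (k * L) - μ₁ - k * exp (k * L) + k)
      * (μ₂ - k)^2 * (μ₂ + k)^2 * (μ₂ - μ₁)^2 * (μ₂ + μ₁)^2
      * (exp (μ₂ * L) - 1) * (exp (μ₂ * L) + 1)
      * exp (-(L : ℂ) * μ₂ - (L : ℂ) * μ₁ - k * L) := by
  have inv (z : ℂ) : exp (z * L) * exp (-z * L) = 1 := by
    rw [← exp_add]; simp
  have hk := inv k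
  have hm := inv μ₁
  have hn := inv μ₂
  have hE : exp (-(L : ℂ) * μ₂ - (L : ℂ) * μ₁ - k * L)
      = exp (-μ₂ * L) * exp (-μ₁ * L) * exp (-k * L) := by
    rw [← exp_add, ← exp_add]; ring_nf
  rw [det_six, det_four _ _ _ _ _ _ hk hm, hE, exp_add]
  generalize exp (μ₂ * L) = c at *
  generalize exp (-μ₂ * L) = c' at *
  -- The `2 × 2` block contributes `e^{-μ₂L} - e^{μ₂L}`; its sign cancels the one in `det_four`.
  have hc : c' - c = -((c - 1) * (c + 1) * c') := by linear_combination c * hn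
  rw [hc]
  ring
end

section
/- Invertibility of the 3×3 multiplier matrix R is equivalent to nonvanishing of F: Let L > 0, k ∈ ℝ \ {0}, and μ̃₁, μ̃₂ ∈ ℝ. Set μ₁ = i μ̃₁ and μ₂ = i μ̃₂, and let R be the 3×3 complex matrix with rows (k, μ₁, μ₂), (sinh(kL), sinh(μ₁L), sinh(μ₂L)), (k cosh(kL), μ₁ cosh(μ₁L), μ₂ cosh(μ₂L)). Then R is invertible if and only if F(μ̃₂) ≠ 0, where F(m) = ( cos(mL)(k sin(μ̃₁L) − μ̃₁ sinh(kL)) + μ̃₁ sinh(kL) cos(μ̃₁L) − k cosh(kL) sin(μ̃₁L) ) · m + k μ̃₁ sin(mL)( cosh(kL) − cos(μ̃₁L) ). -/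
/-!
Since `sinh (i t) = i sin t` and `cosh (i t) = cos t`, the last two columns of the matrix are
`i` times real columns. Expanding the determinant gives exactly `-F(μ̃₂)`, so the matrix, whose
entries lie in a field, is invertible precisely when `F(μ̃₂) ≠ 0`.
-/

open Complex

/-- Invertibility of the 3×3 multiplier matrix `R` (with `μ₁ = iμ̃₁`, `μ₂ = iμ̃₂`
purely imaginary) is equivalent to the nonvanishing of the real function `F`
at `μ̃₂`. -/
theorem R_invertible_iff_F_ne_zero (L : ℝ) (hL : 0 < L) (k : ℝ) (hk : k ≠ 0)
    (μt₁ μt₂ : ℝ) :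
    (IsUnit
      (!![(k : ℂ), I * (μt₁ : ℂ), I * (μt₂ : ℂ);
          Complex.sinh ((k : ℂ) * (L : ℂ)), Complex.sinh (I * (μt₁ : ℂ) * (L : ℂ)),
            Complex.sinh (I * (μt₂ : ℂ) * (L : ℂ));
          (k : ℂ) * Complex.cosh ((k : ℂ) * (L : ℂ)),
            I * (μt₁ : ℂ) * Complex.cosh (I * (μt₁ : ℂ) * (L : ℂ)),
            I * (μt₂ : ℂ) * Complex.cosh (I * (μt₂ : ℂ) * (L : ℂ))] :
        Matrix (Fin 3) (Fin 3) ℂ))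
    ↔ (Real.cos (μt₂ * L) * (k * Real.sin (μt₁ * L) - μt₁ * Real.sinh (k * L))
          + μt₁ * Real.sinh (k * L) * Real.cos (μt₁ * L)
          - k * Real.cosh (k * L) * Real.sin (μt₁ * L)) * μt₂
        + k * μt₁ * Real.sin (μt₂ * L) * (Real.cosh (k * L) - Real.cos (μt₁ * L)) ≠ 0 := by
  have sinh_I (m : ℝ) :
      Complex.sinh (I * (m : ℂ) * (L : ℂ)) = I * ((Real.sin (m * L) : ℝ) : ℂ) := by
    rw [show I * (m : ℂ) * (L : ℂ) = ((m * L : ℝ) : ℂ) * I by push_cast; ring,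
      Complex.sinh_mul_I, Complex.ofReal_sin, mul_comm]
  have cosh_I (m : ℝ) :
      Complex.cosh (I * (m : ℂ) * (L : ℂ)) = ((Real.cos (m * L) : ℝ) : ℂ) := by
    rw [show I * (m : ℂ) * (L : ℂ) = ((m * L : ℝ) : ℂ) * I by push_cast; ring,
      Complex.cosh_mul_I, Complex.ofReal_cos]
  -- Columns two and three each carry a factor `I`, so the determinant is `I ^ 2 * F = -F`.
  rw [Matrix.isUnit_iff_isUnit_det, isUnit_iff_ne_zero, not_iff_not,
    ← Complex.ofReal_eq_zero, ← neg_eq_zero (a := Complex.ofReal _)]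
  refine Eq.congr_left ?_
  rw [Matrix.det_fin_three, ← Complex.ofReal_mul k L, ← Complex.ofReal_sinh,
    ← Complex.ofReal_cosh]
  simp only [Matrix.of_apply, Matrix.cons_val, sinh_I, cosh_I]
  simp only [Complex.ofReal_add, Complex.ofReal_sub, Complex.ofReal_mul]
  linear_combination (
    (Real.cos (μt₂ * L) * (k * Real.sin (μt₁ * L) - μt₁ * Real.sinh (k * L))
          + μt₁ * Real.sinh (k * L) * Real.cos (μt₁ * L)
          - k * Real.cosh (k * L) * Real.sin (μt₁ * L)) * μt₂
        + k * μt₁ * Real.sin (μt₂ * L) * (Real.cosh (k * L) - Real.cos (μt₁ * L)) : ℂ) * I_sq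
end

section
/- Countability of the zero set of F: Let L > 0, k ∈ ℝ \ {0}, μ̃₁ ∈ ℝ \ {0}, and define F : ℝ → ℝ by F(m) = ( cos(mL)(k sin(μ̃₁L) − μ̃₁ sinh(kL)) + μ̃₁ sinh(kL) cos(μ̃₁L) − k cosh(kL) sin(μ̃₁L) ) · m + k μ̃₁ sin(mL)( cosh(kL) − cos(μ̃₁L) ). Then F is real-analytic on ℝ, F is not identically zero, and the set { m ∈ ℝ : F(m) = 0 } is at most countable. -/
/-!
Write `F(m) = (A cos(mL) + B) m + C sin(mL)` with `A = k sin(μ̃₁L) − μ̃₁ sinh(kL)`. At `m = π/L` and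
`m = 2π/L` the sine vanishes and the cosine is `−1` and `1`, so `F = 0` would give
`B − A = A + B = 0`, hence `A = 0`. But `|sin x| ≤ |x|` and `|sinh x| > |x|` for `x ≠ 0` force
`A ≠ 0` (`sin_sinh_coeff_ne_zero`). Thus `F` is a nonzero analytic function on the connected line;
its zero set is discrete, and a discrete subset of `ℝ` is countable.
-/

open Real

lemma sin_sinh_coeff_ne_zero {L k μ : ℝ} (hL : 0 < L) (hk : k ≠ 0) (hμ : μ ≠ 0) :
    k * sin (μ * L) - μ * sinh (k * L) ≠ 0 := by
  intro h
  have h1 : |k| * |sin (μ * L)| = |μ| * sinh (|k| * L) := by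
    have := congrArg abs (sub_eq_zero.mp h)
    rwa [abs_mul, abs_mul, abs_sinh, abs_mul k L, abs_of_pos hL] at this
  have h2 : |sin (μ * L)| ≤ |μ| * L := by
    have : |sin (μ * L)| ≤ |μ * L| := abs_sin_le_abs
    rwa [abs_mul μ L, abs_of_pos hL] at this
  have hk' : 0 < |k| := abs_pos.mpr hk
  have hμ' : 0 < |μ| := abs_pos.mpr hμ
  have h3 : |k| * L < sinh (|k| * L) := self_lt_sinh_iff.mpr (by positivity)
  have h4 := mul_lt_mul_of_pos_left h3 hμ'
  have h5 := mul_le_mul_of_nonneg_left h2 hk'.le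
  linarith

lemma countable_zeros_of_analytic {f : ℝ → ℝ} (hf : ∀ x, AnalyticAt ℝ f x)
    (hne : ¬ ∀ x, f x = 0) : {x | f x = 0}.Countable := by
  have hf' : AnalyticOnNhd ℝ f Set.univ := fun x _ => hf x
  obtain ⟨x, hx⟩ := not_forall.mp hne
  have h := hf'.preimage_zero_mem_codiscrete hx
  refine (HereditarilyLindelofSpace.isLindelof _).countable_of_isDiscrete ?_
  have := isDiscrete_of_codiscreteWithin (U := Set.univ) (s := {x | f x = 0}) h
  simpa using this

/-- Countability of the zero set of `F`: the function
`F(m) = (cos(mL)(k sin(μ̃₁L) − μ̃₁ sinh(kL)) + μ̃₁ sinh(kL) cos(μ̃₁L) − k cosh(kL) sin(μ̃₁L))·m`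
`+ k μ̃₁ sin(mL)(cosh(kL) − cos(μ̃₁L))`
is real-analytic on `ℝ`, not identically zero, and its zero set is at most countable. -/
theorem zero_set_F_countable (L : ℝ) (hL : 0 < L) (k : ℝ) (hk : k ≠ 0)
    (μt₁ : ℝ) (hμ : μt₁ ≠ 0) :
    (∀ m : ℝ, AnalyticAt ℝ
      (fun m : ℝ =>
        (cos (m * L) * (k * sin (μt₁ * L) - μt₁ * sinh (k * L))
            + μt₁ * sinh (k * L) * cos (μt₁ * L)
            - k * cosh (k * L) * sin (μt₁ * L)) * m
          + k * μt₁ * sin (m * L) * (cosh (k * L) - cos (μt₁ * L))) m) ∧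
    (¬ ∀ m : ℝ,
        (cos (m * L) * (k * sin (μt₁ * L) - μt₁ * sinh (k * L))
            + μt₁ * sinh (k * L) * cos (μt₁ * L)
            - k * cosh (k * L) * sin (μt₁ * L)) * m
          + k * μt₁ * sin (m * L) * (cosh (k * L) - cos (μt₁ * L)) = 0) ∧
    Set.Countable { m : ℝ |
        (cos (m * L) * (k * sin (μt₁ * L) - μt₁ * sinh (k * L))
            + μt₁ * sinh (k * L) * cos (μt₁ * L)
            - k * cosh (k * L) * sin (μt₁ * L)) * m
          + k * μt₁ * sin (m * L) * (cosh (k * L) - cos (μt₁ * L)) = 0 } := by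
  have hA := sin_sinh_coeff_ne_zero hL hk hμ
  refine (fun h => ⟨h.1, h.2, countable_zeros_of_analytic h.1 h.2⟩ : _ ∧ _ → _) ⟨?_, ?_⟩
  · intro m
    fun_prop
  · intro h
    have h1 := h (π / L)
    have h2 := h (2 * π / L)
    rw [div_mul_cancel₀ _ hL.ne'] at h1 h2
    simp only [cos_pi, sin_pi, cos_two_pi, sin_two_pi, mul_zero, zero_mul, add_zero] at h1 h2
    have h1' := (mul_eq_zero.mp h1).resolve_right (by positivity)
    have h2' := (mul_eq_zero.mp h2).resolve_right (by positivity)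
    exact hA (by linarith)
end
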